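/- arXiv:math/0609339 — 3 statements merged into one kernel-verified Lean document; each statement's English description precedes it below -/
import Mathlib

section
/- Let T be a tree with n vertices, and let i, j be integers with 1 ≤ j ≤ i ≤ n−1. Then the number of subtrees S of T with #S = i edges and #L(S) = j leaf edges equals Σ_{λ ⊢ n} φ(λ,i,j) · c_λ(T), where for a partition λ = (λ_1 ≥ … ≥ λ_ℓ) of n one sets φ(λ,i,j) = (−1)^{i+j} C(ℓ−1, ℓ−n+i) Σ_{d=1}^{j} (−1)^d C(i−d, j−d) Σ_{k=1}^{ℓ} C(λ_k−1, d), with the convention C(p,q) = 0 if q < 0 or q > p. -/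
open SimpleGraph Finset

variable {V : Type*} {W : Type*}

open Classical in
/-- `edgeSetType A` : the "type" of the edge set `A`, i.e. the partition (as a multiset of
positive integers) of `#V` whose parts are the orders of the connected components of the
spanning subgraph `(V, A)`. -/
noncomputable def edgeSetType [Fintype V] (A : Finset (Sym2 V)) : Multiset ℕ :=
  ((Finset.univ : Finset V).image
    (fun v => (SimpleGraph.fromEdgeSet (↑A : Set (Sym2 V))).connectedComponentMk v)).val.map
    (fun c => c.supp.ncard)

open Classical in
/-- `cCoeff G λ = Σ_{A ⊆ E(G), type(A) = λ} (−1)^{#A}`, the coefficient of the power-sum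
symmetric function `p_λ` in the chromatic symmetric function `X_G`. -/
noncomputable def cCoeff [Fintype V] (G : SimpleGraph V) (lam : Multiset ℕ) : ℤ :=
  ∑ A ∈ (Finset.univ : Finset (Sym2 V)).powerset,
    if (↑A : Set (Sym2 V)) ⊆ G.edgeSet ∧ edgeSetType A = lam then (-1 : ℤ) ^ A.card else 0

open Classical in
/-- `NCoeff G λ` : the number of edge sets `A ⊆ E(G)` with `type(A) = λ`. -/
noncomputable def NCoeff [Fintype V] (G : SimpleGraph V) (lam : Multiset ℕ) : ℕ :=
  ((Finset.univ : Finset (Sym2 V)).powerset.filter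
    (fun (A : Finset (Sym2 V)) => (↑A : Set (Sym2 V)) ⊆ G.edgeSet ∧ edgeSetType A = lam)).card

/-- `S` is a subtree of `T`: a nonempty set of edges of `T` such that the subgraph consisting of
the edges of `S` together with their endpoints is connected. -/
def IsSubtreeSet (T : SimpleGraph V) (S : Set (Sym2 V)) : Prop :=
  S.Nonempty ∧ S ⊆ T.edgeSet ∧
    ((SimpleGraph.fromEdgeSet S).induce {v | ∃ e ∈ S, v ∈ e}).Connected

/-- The leaf edges of an edge set `S` : edges of `S` having an endpoint incident to no other
edge of `S`. -/
def leafEdges (S : Set (Sym2 V)) : Set (Sym2 V) :=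
  {e | e ∈ S ∧ ∃ v ∈ e, ∀ e' ∈ S, v ∈ e' → e' = e}

/-- The connector `K(A)` of a (nonempty) edge set `A` of a tree `T`: the minimal subset `K` of
`E(T) \ A` such that `A ∪ K` is a subtree of `T`. -/
def connector (T : SimpleGraph V) (A : Set (Sym2 V)) : Set (Sym2 V) :=
  ⋂₀ {B | B ⊆ T.edgeSet \ A ∧ IsSubtreeSet T (A ∪ B)}

/-- Integer-valued binomial coefficient `C(p, q)` with the convention `C(p,q) = 0` for `q < 0`
(and, as usual, for `q > p`). -/
def chooseInt (p : ℕ) (q : ℤ) : ℤ := if 0 ≤ q then (p.choose q.toNat : ℤ) else 0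

/-- `ψ(λ,a,b) = (−1)^{a+b} C(ℓ−1, ℓ−n+a+b) Σ_{k=1}^{ℓ} C(λ_k − 1, a)` for a partition `λ` of
`n` with `ℓ` parts. -/
def psi (n : ℕ) (lam : Multiset ℕ) (a b : ℕ) : ℤ :=
  (-1 : ℤ) ^ (a + b) * chooseInt (lam.card - 1) ((lam.card : ℤ) - n + a + b) *
    (lam.map (fun m => ((m - 1).choose a : ℤ))).sum

/-- `φ(λ,i,j) = (−1)^{i+j} C(ℓ−1, ℓ−n+i) Σ_{d=1}^{j} (−1)^d C(i−d, j−d) Σ_{k=1}^{ℓ} C(λ_k−1, d)`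
for a partition `λ` of `n` with `ℓ` parts. -/
def phi (n : ℕ) (lam : Multiset ℕ) (i j : ℕ) : ℤ :=
  (-1 : ℤ) ^ (i + j) * chooseInt (lam.card - 1) ((lam.card : ℤ) - n + i) *
    ∑ d ∈ Finset.Icc 1 j, (-1 : ℤ) ^ d * ((i - d).choose (j - d) : ℤ) *
      (lam.map (fun m => ((m - 1).choose d : ℤ))).sum

/-!
Write `E` for the edge set of `T`, and for a nonempty `D ⊆ E` let `h(D)` be the edge set of the
smallest subtree containing `D`. A component of `(V, A)` with `m` vertices has `m - 1` edges, so
`Σ_k C(λ_k - 1, d)` with `λ = type(A)` counts the `d`-element sets `D` with `h(D) ⊆ A`, and the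
binomial coefficient in front counts the `i`-element sets `B` with `A ⊆ B ⊆ E`. Summing over `A`,
the signs `(-1)^#A` cancel over each interval `h(D) ⊆ A ⊆ B` unless `h(D) = B`, so what remains is
a sum over the `B` with `#B = i` of the weights of the `D` with `h(D) = B`. These exist only if `B`
is a subtree, and are then exactly the sets between the set `L` of leaf edges of `B` and `B` itself.
As `C(i - d, j - d)` counts the `j`-element sets between a `d`-element `D` and `B`, a second
cancellation over the intervals `L ⊆ D ⊆ J` with `#J = j` leaves `(-1)^j` if `#L = j`, and `0`
otherwise.
-/

section AlternatingSums

variable {α ι : Type*} [DecidableEq α]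

theorem sum_Icc_neg_one_pow_card (S B : Finset α) :
    ∑ A ∈ Icc S B, (-1 : ℤ) ^ #A = if S = B then (-1) ^ #B else 0 := by
  by_cases hSB : S ⊆ B
  · have hdisj {A} (hA : A ∈ (B \ S).powerset) : Disjoint S A :=
      disjoint_of_subset_right (mem_powerset.1 hA) disjoint_sdiff
    have hinj : Set.InjOn (S ∪ ·) ((B \ S).powerset : Set (Finset α)) :=
      Set.LeftInvOn.injOn (f₁' := (· \ S)) fun A hA ↦ union_sdiff_cancel_left (hdisj hA)
    calc ∑ A ∈ Icc S B, (-1 : ℤ) ^ #A = ∑ A ∈ (B \ S).powerset, (-1) ^ #S * (-1) ^ #A := by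
          rw [Icc_eq_image_powerset hSB, sum_image hinj]
          exact sum_congr rfl fun A hA ↦ by rw [card_union_of_disjoint (hdisj hA), pow_add]
      _ = if S = B then (-1) ^ #B else 0 := by
          have hempty : B \ S = ∅ ↔ S = B := sdiff_eq_empty_iff_subset.trans hSB.ge_iff_eq
          rw [← mul_sum, sum_powerset_neg_one_pow_card]
          grind
  · rw [Icc_eq_empty hSB, sum_empty, if_neg fun h ↦ hSB h.subset]

theorem sum_Icc_neg_one_pow_card_mul_card_filter_subset {E : Finset α} {ℬ : Finset (Finset α)}
    (hℬ : ∀ B ∈ ℬ, B ⊆ E) (S : Finset α) :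
    ∑ A ∈ Icc S E, (-1 : ℤ) ^ #A * #{B ∈ ℬ | A ⊆ B} = if S ∈ ℬ then (-1) ^ #S else 0 :=
  calc ∑ A ∈ Icc S E, (-1 : ℤ) ^ #A * #{B ∈ ℬ | A ⊆ B}
      = ∑ A ∈ Icc S E, ∑ B ∈ ℬ with A ⊆ B, (-1 : ℤ) ^ #A := by
        simp only [sum_const, nsmul_eq_mul, mul_comm]
    _ = ∑ B ∈ ℬ, ∑ A ∈ Icc S B, (-1 : ℤ) ^ #A :=
        sum_comm' fun A B ↦ by grind
    _ = ∑ B ∈ ℬ, if S = B then (-1) ^ #S else 0 :=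
        sum_congr rfl fun B _ ↦ by rw [sum_Icc_neg_one_pow_card]; grind
    _ = if S ∈ ℬ then (-1) ^ #S else 0 := sum_ite_eq ..

theorem sum_powerset_mul_card_filter_subset_mul_sum_filter_subset {E : Finset α}
    {ℬ : Finset (Finset α)} (hℬ : ∀ B ∈ ℬ, B ⊆ E) (𝒟 : Finset ι) (h : ι → Finset α) (w : ι → ℤ) :
    ∑ A ∈ E.powerset, (-1 : ℤ) ^ #A * #{B ∈ ℬ | A ⊆ B} * ∑ D ∈ 𝒟 with h D ⊆ A, w D =
      ∑ B ∈ ℬ, (-1) ^ #B * ∑ D ∈ 𝒟 with h D = B, w D :=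
  calc ∑ A ∈ E.powerset, (-1 : ℤ) ^ #A * #{B ∈ ℬ | A ⊆ B} * ∑ D ∈ 𝒟 with h D ⊆ A, w D
      = ∑ D ∈ 𝒟, ∑ A ∈ Icc (h D) E, (-1 : ℤ) ^ #A * #{B ∈ ℬ | A ⊆ B} * w D := by
        simp only [mul_sum]
        exact sum_comm' fun A D ↦ by grind
    _ = ∑ D ∈ 𝒟, ∑ B ∈ ℬ with h D = B, (-1) ^ #B * w D :=
        sum_congr rfl fun D _ ↦ by
          rw [← sum_mul, sum_Icc_neg_one_pow_card_mul_card_filter_subset hℬ, sum_filter,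
            sum_ite_eq, ite_mul, zero_mul]
    _ = ∑ B ∈ ℬ, (-1) ^ #B * ∑ D ∈ 𝒟 with h D = B, w D := by
        simp only [mul_sum]
        exact sum_comm' fun D B ↦ by grind

theorem card_filter_powersetCard_subset_eq_chooseInt {A E : Finset α} (hA : A ⊆ E) (i : ℕ) :
    (#{B ∈ E.powersetCard i | A ⊆ B} : ℤ) = chooseInt (#E - #A) ((i : ℤ) - #A) := by
  rcases le_or_gt #A i with hi | hi
  · rw [card_filter_powersetCard_subset A E i hA hi, chooseInt, if_pos (by lia)]
    congr 2
    lia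
  · rw [chooseInt, if_neg (by lia), Nat.cast_eq_zero, card_eq_zero, filter_eq_empty_iff]
    intro B hB hAB
    exact hi.not_ge ((mem_powersetCard.1 hB).2 ▸ card_le_card hAB)

end AlternatingSums

section LeafWeight

variable {α : Type*} {B D L : Finset α} {i j : ℕ}

/-- The weight with which `φ(λ,i,j)` counts an edge set `D`, up to the factors independent of `D`.
The cutoff is the range of the sum over `d` in `φ`, within which `j - #D` is not truncated. -/
def leafWeight (i j : ℕ) (D : Finset α) : ℤ :=
  if #D ∈ Icc 1 j then (-1) ^ #D * (i - #D).choose (j - #D) else 0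

theorem leafWeight_empty : leafWeight i j (∅ : Finset α) = 0 := by
  simp [leafWeight]

theorem leafWeight_card_eq [DecidableEq α] (hDB : D ⊆ B) (hne : D.Nonempty) :
    leafWeight #B j D = (-1) ^ #D * #{J ∈ B.powersetCard j | D ⊆ J} := by
  have hpos : 1 ≤ #D := hne.card_pos
  rw [card_filter_powersetCard_subset_eq_chooseInt hDB, leafWeight, chooseInt]
  simp only [mem_Icc, hpos, true_and, sub_nonneg, Nat.cast_le, Int.toNat_sub, mul_ite, mul_zero]

theorem sum_leafWeight (𝒟 : Finset (Finset α)) :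
    ∑ D ∈ 𝒟, leafWeight i j D =
      ∑ d ∈ Icc 1 j, (-1) ^ d * ((i - d).choose (j - d) : ℤ) * #{D ∈ 𝒟 | #D = d} :=
  calc ∑ D ∈ 𝒟, leafWeight i j D
      = ∑ D ∈ 𝒟 with #D ∈ Icc 1 j, (-1) ^ #D * ((i - #D).choose (j - #D) : ℤ) := by
        simp only [leafWeight, sum_filter]
    _ = ∑ d ∈ Icc 1 j, ∑ D ∈ 𝒟 with #D = d, (-1) ^ #D * ((i - #D).choose (j - #D) : ℤ) :=
        (sum_fiberwise_eq_sum_filter ..).symm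
    _ = ∑ d ∈ Icc 1 j, (-1) ^ d * ((i - d).choose (j - d) : ℤ) * #{D ∈ 𝒟 | #D = d} := by
        refine sum_congr rfl fun d _ ↦ ?_
        rw [mul_comm, ← nsmul_eq_mul, ← sum_const]
        exact sum_congr rfl fun D hD ↦ by rw [(mem_filter.1 hD).2]

theorem sum_Icc_leafWeight [DecidableEq α] (hL : L.Nonempty) :
    ∑ D ∈ Icc L B, leafWeight #B j D = if L ∈ B.powersetCard j then (-1) ^ j else 0 :=
  calc ∑ D ∈ Icc L B, leafWeight #B j D
      = ∑ D ∈ Icc L B, (-1) ^ #D * (#{J ∈ B.powersetCard j | D ⊆ J} : ℤ) :=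
        sum_congr rfl fun D hD ↦ leafWeight_card_eq (mem_Icc.1 hD).2 (hL.mono (mem_Icc.1 hD).1)
    _ = if L ∈ B.powersetCard j then (-1) ^ #L else 0 :=
        sum_Icc_neg_one_pow_card_mul_card_filter_subset (fun J hJ ↦ (mem_powersetCard.1 hJ).1) L
    _ = if L ∈ B.powersetCard j then (-1) ^ j else 0 := by grind

end LeafWeight

section SteinerTree

variable {T G D : SimpleGraph V} {U : Set V} {e : Sym2 V} {u v x : V}

/-- `Links G U`: any two vertices of `U` are joined by a walk of `G`. -/
def Links (G : SimpleGraph V) (U : Set V) : Prop :=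
  ∀ u ∈ U, ∀ v ∈ U, G.Reachable u v

/-- The Steiner tree of the vertex set `U` in a tree `T`, encoded as the graph of all edges of `T`
whose removal separates two vertices of `U`. If `U` is the set of endpoints of a nonempty edge set
`D`, its edges are those of `D` and of the connector `K(D)`. -/
def steinerTree (T : SimpleGraph V) (U : Set V) : SimpleGraph V :=
  T.deleteEdges {e | Links (T.deleteEdges {e}) U}

theorem steinerTree_le : steinerTree T U ≤ T :=
  deleteEdges_le _

theorem mem_edgeSet_steinerTree :
    e ∈ (steinerTree T U).edgeSet ↔ e ∈ T.edgeSet ∧ ¬Links (T.deleteEdges {e}) U := by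
  rw [steinerTree, edgeSet_deleteEdges, Set.mem_sdiff, Set.mem_ofPred_eq]

theorem not_reachable_deleteEdges_of_mem_edges (hG : G.IsAcyclic) {p : G.Walk u v} (hp : p.IsPath)
    (he : e ∈ p.edges) : ¬(G.deleteEdges {e}).Reachable u v := by
  intro hreach
  obtain ⟨q, hq⟩ := hreach.exists_isPath
  have hpq : p = q.mapLe (deleteEdges_le _) :=
    congrArg Subtype.val ((hG.subsingleton_path u v).elim ⟨p, hp⟩ ⟨_, hq.mapLe _⟩)
  rw [hpq, Walk.edges_mapLe_eq_edges] at he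
  simpa using q.edges_subset_edgeSet he

theorem mem_edgeSet_steinerTree_of_mem_edges (hT : T.IsAcyclic) {p : T.Walk u v} (hp : p.IsPath)
    (hu : u ∈ U) (hv : v ∈ U) (he : e ∈ p.edges) : e ∈ (steinerTree T U).edgeSet :=
  mem_edgeSet_steinerTree.2 ⟨p.edges_subset_edgeSet he,
    fun h ↦ not_reachable_deleteEdges_of_mem_edges hT hp he (h u hu v hv)⟩

theorem steinerTree_le_iff (hT : T.IsTree) (hG : G ≤ T) : steinerTree T U ≤ G ↔ Links G U := by
  refine ⟨fun h u hu v hv ↦ ?_, fun h ↦ edgeSet_subset_edgeSet.1 fun e he ↦ ?_⟩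
  · obtain ⟨p, hp⟩ := hT.connected.exists_isPath u v
    exact ⟨p.transfer G fun e he ↦ edgeSet_subset_edgeSet.2 h
      (mem_edgeSet_steinerTree_of_mem_edges hT.isAcyclic hp hu hv he)⟩
  · by_contra heG
    have hle : G ≤ T.deleteEdges {e} := by
      rw [← edgeSet_subset_edgeSet, edgeSet_deleteEdges]
      exact Set.subset_sdiff_singleton (edgeSet_subset_edgeSet.2 hG) heG
    exact (mem_edgeSet_steinerTree.1 he).2 fun u hu v hv ↦ (h u hu v hv).mono hle

theorem links_steinerTree (hT : T.IsTree) : Links (steinerTree T U) U :=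
  (steinerTree_le_iff hT steinerTree_le).1 le_rfl

theorem exists_isPath_of_mem_support_steinerTree (hT : T.IsTree)
    (hx : x ∈ (steinerTree T U).support) :
    ∃ u ∈ U, ∃ v ∈ U, ∃ p : (steinerTree T U).Walk u v, p.IsPath ∧ x ∈ p.support := by
  obtain ⟨y, hxy⟩ := (mem_support _).1 hx
  have hsep := (mem_edgeSet_steinerTree (e := s(x, y)).1 hxy).2
  simp only [Links, not_forall] at hsep
  obtain ⟨u, hu, v, hv, huv⟩ := hsep
  obtain ⟨p, hp⟩ := (links_steinerTree hT u hu v hv).exists_isPath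
  have he : s(x, y) ∈ (p.mapLe steinerTree_le).edges :=
    (p.mapLe steinerTree_le).mem_edges_of_not_reachable_deleteEdges huv
  rw [Walk.edges_mapLe_eq_edges] at he
  exact ⟨u, hu, v, hv, p, hp, p.fst_mem_support_of_mem_edges he⟩

theorem links_support_steinerTree (hT : T.IsTree) :
    Links (steinerTree T U) (steinerTree T U).support := by
  have hU {x} (hx : x ∈ (steinerTree T U).support) : ∃ u ∈ U, (steinerTree T U).Reachable u x := by
    obtain ⟨u, hu, v, -, p, -, hxp⟩ := exists_isPath_of_mem_support_steinerTree hT hx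
    obtain ⟨q, -⟩ := Walk.mem_support_iff_exists_append.1 hxp
    exact ⟨u, hu, q.reachable⟩
  intro x hx y hy
  obtain ⟨u, hu, hux⟩ := hU hx
  obtain ⟨v, hv, hvy⟩ := hU hy
  exact hux.symm.trans ((links_steinerTree hT u hu v hv).trans hvy)

theorem mem_of_subsingleton_neighborSet_steinerTree (hT : T.IsTree)
    (hx : x ∈ (steinerTree T U).support)
    (hleaf : ((steinerTree T U).neighborSet x).Subsingleton) : x ∈ U := by
  obtain ⟨u, hu, v, hv, p, hp, hxp⟩ := exists_isPath_of_mem_support_steinerTree hT hx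
  by_contra hxU
  exact hp.isTrail.not_mem_support_of_subsingleton_neighborSet (ne_of_mem_of_not_mem hu hxU).symm
    (ne_of_mem_of_not_mem hv hxU).symm hleaf hxp

theorem le_steinerTree_support (hT : T.IsAcyclic) (hD : D ≤ T) : D ≤ steinerTree T D.support := by
  intro u v huv
  exact mem_edgeSet_steinerTree_of_mem_edges (e := s(u, v)) hT (hD huv).isPath_toWalk
    huv.mem_support_left huv.mem_support_right (by simp)

theorem exists_isPath_mem_edges_subsingleton_neighborSet [Finite G.edgeSet] (hG : G.IsAcyclic)
    (he : e ∈ G.edgeSet) :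
    ∃ (u v : V) (p : G.Walk u v), p.IsPath ∧ e ∈ p.edges ∧
      (G.neighborSet u).Subsingleton ∧ (G.neighborSet v).Subsingleton := by
  have := Fintype.ofFinite G.edgeSet
  let lengths := {n | ∃ (u v : V) (p : G.Walk u v), p.IsPath ∧ e ∈ p.edges ∧ p.length = n}
  have hfin : lengths.Finite := (Set.finite_le_nat #G.edgeFinset).subset
    fun n ⟨_, _, _, hp, _, hn⟩ ↦ hn ▸ hp.isTrail.length_le_card_edgeFinset
  have hne : lengths.Nonempty := by
    induction e with | h x y
    have hxy : G.Adj x y := he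
    exact ⟨_, x, y, hxy.toWalk, hxy.isPath_toWalk, by simp, rfl⟩
  obtain ⟨_, ⟨u, v, p, hp, hep, rfl⟩, hmax⟩ := hfin.exists_maximal hne
  have hlongest {u' v'} {q : G.Walk u' v'} (hq : q.IsPath) (heq : e ∈ q.edges) :
      q.length ≤ p.length := by
    have := hmax ⟨u', v', q, hq, heq, rfl⟩
    lia
  refine ⟨u, v, p, hp, hep, ?_, ?_⟩
  · suffices h : ∀ w, G.Adj u w → w = p.snd from fun w hw w' hw' ↦ (h w hw).trans (h w' hw').symm
    intro w huw
    refine hG.eq_snd_of_adj_start hp huw ?_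
    by_contra hwp
    have := hlongest (hp.cons (h := huw.symm) hwp) (by simp [hep])
    simp at this
  · suffices h : ∀ w, G.Adj v w → w = p.penultimate from
      fun w hw w' hw' ↦ (h w hw).trans (h w' hw').symm
    intro w hvw
    refine hG.eq_penultimate_of_adj_end hp hvw ?_
    by_contra hwp
    have := hlongest (hp.concat hwp hvw) (by simp [Walk.edges_concat, hep])
    simp at this

theorem mem_leafEdges_edgeSet :
    e ∈ leafEdges G.edgeSet ↔ e ∈ G.edgeSet ∧ ∃ v ∈ e, (G.neighborSet v).Subsingleton := by
  refine and_congr_right fun he ↦ exists_congr fun v ↦ and_congr_right fun hv ↦ ?_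
  obtain ⟨w, rfl⟩ := hv
  constructor
  · intro h x hx y hy
    have hxw := h s(v, x) hx (Sym2.mem_mk_left v x)
    have hyw := h s(v, y) hy (Sym2.mem_mk_left v y)
    exact Sym2.congr_right.1 (hxw.trans hyw.symm)
  · rintro h e' he' ⟨x, rfl⟩
    exact Sym2.congr_right.2 (h he' he)

theorem mk_mem_leafEdges_edgeSet (huv : G.Adj u v) (hu : (G.neighborSet u).Subsingleton) :
    s(u, v) ∈ leafEdges G.edgeSet :=
  mem_leafEdges_edgeSet.2 ⟨huv, u, Sym2.mem_mk_left u v, hu⟩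

theorem leafEdges_edgeSet_nonempty [Finite G.edgeSet] (hG : G.IsAcyclic)
    (hne : G.edgeSet.Nonempty) : (leafEdges G.edgeSet).Nonempty := by
  obtain ⟨e, he⟩ := hne
  obtain ⟨u, v, p, -, hep, hu, -⟩ := exists_isPath_mem_edges_subsingleton_neighborSet hG he
  have hnil : ¬p.Nil := fun h ↦ by simp [Walk.edges_eq_nil.2 h] at hep
  exact ⟨_, mk_mem_leafEdges_edgeSet (p.adj_snd hnil) hu⟩

theorem preconnected_induce_support_iff :
    (G.induce G.support).Preconnected ↔ Links G G.support := by
  constructor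
  · intro h u hu v hv
    exact (h ⟨u, hu⟩ ⟨v, hv⟩).map (Embedding.induce G.support).toHom
  · rintro h ⟨u, hu⟩ ⟨v, hv⟩
    obtain ⟨p⟩ := h u hu v hv
    by_cases hnil : p.Nil
    · obtain rfl := hnil.eq
      rfl
    · exact ⟨p.induce _ fun _ ↦ mem_support_of_mem_walk_support p hnil⟩

theorem support_nonempty_iff : G.support.Nonempty ↔ G.edgeSet.Nonempty := by
  rw [Set.nonempty_iff_ne_empty, ne_eq, support_eq_bot_iff, edgeSet_nonempty]

theorem isSubtreeSet_edgeSet_iff (hG : G ≤ T) :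
    IsSubtreeSet T G.edgeSet ↔ G.edgeSet.Nonempty ∧ Links G G.support := by
  have hsupp : {v | ∃ e ∈ G.edgeSet, v ∈ e} = G.support := by
    ext v
    rw [Set.mem_ofPred_eq, mem_support]
    constructor
    · rintro ⟨_, he, w, rfl⟩
      exact ⟨w, he⟩
    · rintro ⟨w, hw⟩
      exact ⟨s(v, w), hw, Sym2.mem_mk_left v w⟩
  have hne (h : G.edgeSet.Nonempty) : Nonempty G.support :=
    (support_nonempty_iff.2 h).to_subtype
  rw [IsSubtreeSet, fromEdgeSet_edgeSet, hsupp, ← preconnected_induce_support_iff, connected_iff]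
  have := edgeSet_subset_edgeSet.2 hG
  tauto

theorem leafEdges_subset_of_steinerTree_support_eq (hT : T.IsTree)
    (h : steinerTree T D.support = G) (hDG : D ≤ G) : leafEdges G.edgeSet ⊆ D.edgeSet := by
  intro e he
  obtain ⟨he, v, ⟨w, rfl⟩, hv⟩ := mem_leafEdges_edgeSet.1 he
  have hvD : v ∈ D.support := by
    subst h
    exact mem_of_subsingleton_neighborSet_steinerTree hT (Adj.mem_support_left he) hv
  obtain ⟨x, hvx⟩ := (mem_support _).1 hvD
  have hxw : x = w := hv (hDG hvx) he
  exact hxw ▸ hvx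

theorem le_steinerTree_support_of_leafEdges_subset [Finite G.edgeSet] (hT : T.IsAcyclic)
    (hG : G ≤ T) (hleaf : leafEdges G.edgeSet ⊆ D.edgeSet) : G ≤ steinerTree T D.support := by
  refine edgeSet_subset_edgeSet.1 fun e he ↦ ?_
  obtain ⟨u, v, p, hp, hep, hu, hv⟩ :=
    exists_isPath_mem_edges_subsingleton_neighborSet (hT.anti hG) he
  have hnil : ¬p.Nil := fun h ↦ by simp [Walk.edges_eq_nil.2 h] at hep
  have huD : u ∈ D.support :=
    Adj.mem_support_left (hleaf (mk_mem_leafEdges_edgeSet (p.adj_snd hnil) hu))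
  have hvD : v ∈ D.support :=
    Adj.mem_support_left (hleaf (mk_mem_leafEdges_edgeSet (p.adj_penultimate hnil).symm hv))
  refine mem_edgeSet_steinerTree_of_mem_edges hT (hp.mapLe hG) huD hvD ?_
  rwa [Walk.edges_mapLe_eq_edges]

theorem steinerTree_support_eq_iff [Finite G.edgeSet] (hT : T.IsTree) (hG : G ≤ T) (hD : D ≤ T)
    (hne : D.edgeSet.Nonempty) :
    steinerTree T D.support = G ↔
      IsSubtreeSet T G.edgeSet ∧ leafEdges G.edgeSet ⊆ D.edgeSet ∧ D ≤ G := by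
  rw [isSubtreeSet_edgeSet_iff hG]
  constructor
  · intro h
    have hDG : D ≤ G := h ▸ le_steinerTree_support hT.isAcyclic hD
    exact ⟨⟨hne.mono (edgeSet_subset_edgeSet.2 hDG), h ▸ links_support_steinerTree hT⟩,
      leafEdges_subset_of_steinerTree_support_eq hT h hDG, hDG⟩
  · rintro ⟨⟨-, hlinks⟩, hleaf, hDG⟩
    have hsupp : D.support ⊆ G.support := support_mono hDG
    exact le_antisymm
      ((steinerTree_le_iff hT hG).2 fun u hu v hv ↦ hlinks u (hsupp hu) v (hsupp hv))
      (le_steinerTree_support_of_leafEdges_subset hT.isAcyclic hG hleaf)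

end SteinerTree

section ConnectedComponents

variable {G : SimpleGraph V} {U : Set V} {D : Finset (Sym2 V)} {d : ℕ}

theorem links_iff_exists_subset_supp (hU : U.Nonempty) :
    Links G U ↔ ∃ c : G.ConnectedComponent, U ⊆ c.supp := by
  constructor
  · obtain ⟨u, hu⟩ := hU
    exact fun h ↦ ⟨G.connectedComponentMk u, fun v hv ↦ ConnectedComponent.sound (h v hv u hu)⟩
  · rintro ⟨c, hc⟩ u hu v hv
    exact ConnectedComponent.exact ((hc hu).trans (hc hv).symm)

theorem edgeSet_fromEdgeSet_of_subset {S : Set (Sym2 V)} (hS : S ⊆ G.edgeSet) :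
    (fromEdgeSet S).edgeSet = S := by
  rw [edgeSet_fromEdgeSet, sdiff_eq_left]
  exact Set.subset_compl_iff_disjoint_right.1 (hS.trans G.edgeSet_subset_compl_diagSet)

theorem fromEdgeSet_le_of_subset {S : Set (Sym2 V)} (hS : S ⊆ G.edgeSet) : fromEdgeSet S ≤ G :=
  (G.fromEdgeSet_le).2 (sdiff_le.trans hS)

theorem subset_edgeFinset_iff [Fintype G.edgeSet] :
    D ⊆ G.edgeFinset ↔ (D : Set (Sym2 V)) ⊆ G.edgeSet :=
  Set.subset_toFinset

variable [Fintype V]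

open Classical in
/-- The edges of `G` lying in the connected component `c`. -/
noncomputable def componentEdges (c : G.ConnectedComponent) : Finset (Sym2 V) :=
  G.edgeFinset ∩ c.supp.toFinset.sym2

theorem coe_componentEdges (c : G.ConnectedComponent) :
    (componentEdges c : Set (Sym2 V)) = G.edgeSet ∩ c.supp.sym2 := by
  simp only [componentEdges, coe_inter, coe_edgeFinset, coe_sym2, Set.coe_toFinset]

theorem componentEdges_subset [Fintype G.edgeSet] (c : G.ConnectedComponent) :
    componentEdges c ⊆ G.edgeFinset := by
  rw [subset_edgeFinset_iff, coe_componentEdges]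
  exact Set.inter_subset_left

theorem mk_mem_componentEdges {c : G.ConnectedComponent} {u v : V} :
    s(u, v) ∈ componentEdges c ↔ G.Adj u v ∧ G.connectedComponentMk u = c := by
  rw [← mem_coe, coe_componentEdges, Set.mem_inter_iff, mem_edgeSet, Set.mk_mem_sym2_iff,
    ConnectedComponent.mem_supp_iff, ConnectedComponent.mem_supp_iff]
  refine and_congr_right fun huv ↦ ?_
  rw [ConnectedComponent.connectedComponentMk_eq_of_adj huv, and_self]

theorem disjoint_componentEdges {c c' : G.ConnectedComponent} (h : c ≠ c') :
    Disjoint (componentEdges c) (componentEdges c') := by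
  refine disjoint_left.2 fun e he he' ↦ ?_
  induction e with | h u v
  exact h ((mk_mem_componentEdges.1 he).2.symm.trans (mk_mem_componentEdges.1 he').2)

theorem card_componentEdges_add_one (hG : G.IsAcyclic) (c : G.ConnectedComponent) :
    #(componentEdges c) + 1 = c.supp.ncard := by
  classical
  have hc : (G.induce c.supp).IsTree := hG.isTree_connectedComponent c
  rw [componentEdges, ← map_edgeFinset_induce, card_map, Set.ncard_eq_toFinset_card',
    Set.toFinset_card, ← hc.card_edgeFinset]

theorem sum_ncard_supp [Fintype G.ConnectedComponent] :
    ∑ c : G.ConnectedComponent, c.supp.ncard = Fintype.card V := by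
  classical
  rw [← card_univ, card_eq_sum_card_fiberwise (f := G.connectedComponentMk) (t := univ) (by simp)]
  refine sum_congr rfl fun c _ ↦ ?_
  rw [← Set.ncard_coe_finset]
  congr 1
  ext v
  simp

theorem card_edgeFinset_add_card_connectedComponent [Fintype G.edgeSet]
    [Fintype G.ConnectedComponent] (hG : G.IsAcyclic) :
    #G.edgeFinset + Fintype.card G.ConnectedComponent = Fintype.card V := by
  classical
  have hunion : univ.biUnion (componentEdges (G := G)) = G.edgeFinset := by
    ext e
    induction e with | h u v
    simp [mk_mem_componentEdges]
  rw [← hunion, card_biUnion fun _ _ _ _ ↦ disjoint_componentEdges, ← sum_ncard_supp (G := G)]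
  simp only [← card_componentEdges_add_one hG, sum_add_distrib, sum_const, card_univ, smul_eq_mul,
    mul_one]

theorem links_support_fromEdgeSet_iff (hD : (D : Set (Sym2 V)) ⊆ G.edgeSet) (hne : D.Nonempty) :
    Links G (fromEdgeSet (D : Set (Sym2 V))).support ↔
      ∃ c : G.ConnectedComponent, D ⊆ componentEdges c := by
  have hedge := edgeSet_fromEdgeSet_of_subset hD
  rw [links_iff_exists_subset_supp (support_nonempty_iff.2 (by rwa [hedge, coe_nonempty]))]
  refine exists_congr fun c ↦ ?_
  rw [← edgeSet_subset_sym2_iff, hedge, ← coe_subset, coe_componentEdges, Set.subset_inter_iff]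
  exact (and_iff_right hD).symm

open Classical in
theorem sum_choose_ncard_supp_sub_one [Fintype G.edgeSet] [Fintype G.ConnectedComponent]
    (hG : G.IsAcyclic) (hd : d ≠ 0) :
    ∑ c : G.ConnectedComponent, (c.supp.ncard - 1).choose d =
      #{D ∈ G.edgeFinset.powersetCard d | ∃ c : G.ConnectedComponent, D ⊆ componentEdges c} := by
  have hdisj (c c' : G.ConnectedComponent) (h : c ≠ c') :
      Disjoint ((componentEdges c).powersetCard d) ((componentEdges c').powersetCard d) := by
    refine disjoint_left.2 fun D hD hD' ↦ hd ?_
    rw [mem_powersetCard] at hD hD'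
    rw [← hD.2, card_eq_zero, ← disjoint_self_iff_empty]
    exact (disjoint_componentEdges h).mono hD.1 hD'.1
  have hunion : univ.biUnion (fun c : G.ConnectedComponent ↦ (componentEdges c).powersetCard d) =
      {D ∈ G.edgeFinset.powersetCard d | ∃ c : G.ConnectedComponent, D ⊆ componentEdges c} := by
    ext D
    simp only [mem_biUnion, mem_univ, true_and, mem_powersetCard, mem_filter]
    have hsub (c : G.ConnectedComponent) (h : D ⊆ componentEdges c) : D ⊆ G.edgeFinset :=
      h.trans (componentEdges_subset c)
    grind
  rw [← hunion, card_biUnion fun c _ c' _ ↦ hdisj c c']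
  simp only [card_powersetCard, ← card_componentEdges_add_one hG, add_tsub_cancel_right]

end ConnectedComponents

section EdgeSets

variable [Fintype V] {T : SimpleGraph V} {A D : Finset (Sym2 V)} {d : ℕ}

open Classical in
theorem edgeSetType_eq_map_univ (A : Finset (Sym2 V)) :
    edgeSetType A = (univ : Finset (fromEdgeSet (A : Set (Sym2 V))).ConnectedComponent).val.map
      fun c ↦ c.supp.ncard := by
  rw [edgeSetType, image_univ_of_surjective (f := connectedComponentMk _) Quot.mk_surjective]

open Classical in
theorem sum_map_edgeSetType {M : Type*} [AddCommMonoid M] (A : Finset (Sym2 V)) (f : ℕ → M) :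
    ((edgeSetType A).map f).sum =
      ∑ c : (fromEdgeSet (A : Set (Sym2 V))).ConnectedComponent, f c.supp.ncard := by
  rw [edgeSetType_eq_map_univ, Multiset.map_map]
  rfl

theorem sum_edgeSetType (A : Finset (Sym2 V)) : (edgeSetType A).sum = Fintype.card V := by
  classical
  rw [← Multiset.map_id (edgeSetType A), sum_map_edgeSetType]
  exact sum_ncard_supp

theorem pos_of_mem_edgeSetType {m : ℕ} (hm : m ∈ edgeSetType A) : 0 < m := by
  rw [edgeSetType, Multiset.mem_map] at hm
  obtain ⟨c, -, rfl⟩ := hm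
  exact (Set.ncard_pos).2 c.nonempty_supp

open Classical in
theorem sum_mul_cCoeff (G : SimpleGraph V) (f : Multiset ℕ → ℤ) :
    ∑ p : (Fintype.card V).Partition, f p.parts * cCoeff G p.parts =
      ∑ A ∈ G.edgeFinset.powerset, (-1) ^ #A * f (edgeSetType A) := by
  have hE : ({A | (A : Set (Sym2 V)) ⊆ G.edgeSet} : Finset (Finset (Sym2 V))) =
      G.edgeFinset.powerset := by
    ext A
    simp [subset_edgeFinset_iff]
  let type (A : Finset (Sym2 V)) : (Fintype.card V).Partition :=
    ⟨edgeSetType A, pos_of_mem_edgeSetType, sum_edgeSetType A⟩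
  calc ∑ p : (Fintype.card V).Partition, f p.parts * cCoeff G p.parts
      = ∑ p : (Fintype.card V).Partition, ∑ A ∈ G.edgeFinset.powerset,
          if type A = p then (-1) ^ #A * f p.parts else 0 := by
        refine sum_congr rfl fun p _ ↦ ?_
        rw [cCoeff, powerset_univ]
        simp only [ite_and]
        rw [← sum_filter, hE, mul_sum]
        simp only [mul_ite, mul_zero, mul_comm, Nat.Partition.ext_iff, type]
    _ = ∑ A ∈ G.edgeFinset.powerset, (-1) ^ #A * f (edgeSetType A) := by
        rw [sum_comm]
        simp only [sum_ite_eq, mem_univ, if_true, type]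

open Classical in
/-- For a nonempty set `D` of edges of a tree `T`, the edge set of the smallest subtree of `T`
containing `D`, that is, `D` together with its connector `K(D)`. -/
noncomputable def edgeHull (T : SimpleGraph V) (D : Finset (Sym2 V)) : Finset (Sym2 V) :=
  (steinerTree T (fromEdgeSet (D : Set (Sym2 V))).support).edgeFinset

theorem coe_edgeHull : (edgeHull T D : Set (Sym2 V)) =
    (steinerTree T (fromEdgeSet (D : Set (Sym2 V))).support).edgeSet := by
  rw [edgeHull, coe_edgeFinset]

theorem edgeHull_subset_iff (hT : T.IsTree) (hA : (A : Set (Sym2 V)) ⊆ T.edgeSet)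
    (hDA : D ⊆ A) (hne : D.Nonempty) :
    edgeHull T D ⊆ A ↔
      ∃ c : (fromEdgeSet (A : Set (Sym2 V))).ConnectedComponent, D ⊆ componentEdges c := by
  have hedge := edgeSet_fromEdgeSet_of_subset hA
  have hle : fromEdgeSet (A : Set (Sym2 V)) ≤ T := fromEdgeSet_le_of_subset hA
  rw [← links_support_fromEdgeSet_iff (by rwa [hedge, coe_subset]) hne, ← steinerTree_le_iff hT hle,
    ← edgeSet_subset_edgeSet, hedge, ← coe_edgeHull, coe_subset]

theorem subset_edgeHull (hT : T.IsAcyclic) (hD : (D : Set (Sym2 V)) ⊆ T.edgeSet) :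
    D ⊆ edgeHull T D := by
  have hedge := edgeSet_fromEdgeSet_of_subset hD
  have hle : fromEdgeSet (D : Set (Sym2 V)) ≤ T := fromEdgeSet_le_of_subset hD
  have h := edgeSet_subset_edgeSet.2 (le_steinerTree_support hT hle)
  rwa [hedge, ← coe_edgeHull, coe_subset] at h

theorem edgeHull_eq_iff (hT : T.IsTree) (hA : (A : Set (Sym2 V)) ⊆ T.edgeSet)
    (hD : (D : Set (Sym2 V)) ⊆ T.edgeSet) (hne : D.Nonempty) :
    edgeHull T D = A ↔ IsSubtreeSet T A ∧ leafEdges (A : Set (Sym2 V)) ⊆ D ∧ D ⊆ A := by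
  have hedgeA := edgeSet_fromEdgeSet_of_subset hA
  have hedgeD := edgeSet_fromEdgeSet_of_subset hD
  have hleA : fromEdgeSet (A : Set (Sym2 V)) ≤ T := fromEdgeSet_le_of_subset hA
  have hleD : fromEdgeSet (D : Set (Sym2 V)) ≤ T := fromEdgeSet_le_of_subset hD
  have h := steinerTree_support_eq_iff hT hleA hleD (by rwa [hedgeD, coe_nonempty])
  rwa [← edgeSet_inj, ← edgeSet_subset_edgeSet, hedgeA, hedgeD, ← coe_edgeHull, coe_inj,
    coe_subset] at h

open Classical in
theorem sum_map_edgeSetType_choose (hT : T.IsTree) (hA : (A : Set (Sym2 V)) ⊆ T.edgeSet)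
    (hd : d ≠ 0) :
    ((edgeSetType A).map fun m ↦ ((m - 1).choose d : ℤ)).sum =
      #{D ∈ T.edgeFinset.powersetCard d | edgeHull T D ⊆ A} := by
  have hedge := edgeSet_fromEdgeSet_of_subset hA
  have hle : fromEdgeSet (A : Set (Sym2 V)) ≤ T := fromEdgeSet_le_of_subset hA
  rw [sum_map_edgeSetType, ← Nat.cast_sum, sum_choose_ncard_supp_sub_one (hT.isAcyclic.anti hle) hd]
  congr 2
  ext D
  have hmem : D ∈ (fromEdgeSet (A : Set (Sym2 V))).edgeFinset.powersetCard d ↔ D ⊆ A ∧ #D = d := by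
    rw [mem_powersetCard, subset_edgeFinset_iff, hedge, coe_subset]
  rw [mem_filter, mem_filter, hmem, mem_powersetCard, subset_edgeFinset_iff]
  have hne (h : #D = d) : D.Nonempty := card_ne_zero.1 (h ▸ hd)
  constructor
  · rintro ⟨⟨hDA, hcard⟩, hc⟩
    exact ⟨⟨(coe_subset.2 hDA).trans hA, hcard⟩, (edgeHull_subset_iff hT hA hDA (hne hcard)).2 hc⟩
  · rintro ⟨⟨hDT, hcard⟩, hhull⟩
    have hDA : D ⊆ A := (subset_edgeHull hT.isAcyclic hDT).trans hhull
    exact ⟨⟨hDA, hcard⟩, (edgeHull_subset_iff hT hA hDA (hne hcard)).1 hhull⟩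

theorem card_add_card_edgeSetType (hT : T.IsAcyclic) (hA : (A : Set (Sym2 V)) ⊆ T.edgeSet) :
    #A + (edgeSetType A).card = Fintype.card V := by
  classical
  have hedge := edgeSet_fromEdgeSet_of_subset hA
  have hle : fromEdgeSet (A : Set (Sym2 V)) ≤ T := fromEdgeSet_le_of_subset hA
  rw [← card_edgeFinset_add_card_connectedComponent (hT.anti hle), edgeSetType_eq_map_univ,
    Multiset.card_map, ← card_def, card_univ]
  congr 2
  rw [← coe_inj, coe_edgeFinset, hedge]

end EdgeSets

section LeafCounts

variable [Fintype V] {T : SimpleGraph V} {A B D : Finset (Sym2 V)} {i j : ℕ}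

open Classical in
theorem phi_edgeSetType (hT : T.IsTree) (hA : (A : Set (Sym2 V)) ⊆ T.edgeSet) :
    phi (Fintype.card V) (edgeSetType A) i j =
      (-1) ^ (i + j) * #{B ∈ T.edgeFinset.powersetCard i | A ⊆ B} *
        ∑ D ∈ T.edgeFinset.powerset with edgeHull T D ⊆ A, leafWeight i j D := by
  have hparts := card_add_card_edgeSetType hT.isAcyclic hA
  have hedges : #T.edgeFinset + 1 = Fintype.card V := hT.card_edgeFinset
  rw [phi, card_filter_powersetCard_subset_eq_chooseInt (subset_edgeFinset_iff.2 hA),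
    sum_leafWeight]
  congr 1
  · congr 2 <;> lia
  · refine sum_congr rfl fun d hd ↦ ?_
    rw [sum_map_edgeSetType_choose hT hA (by grind)]
    congr 3
    grind

open Classical in
theorem edgeHull_eq_iff_mem_Icc (hT : T.IsTree) (hB : (B : Set (Sym2 V)) ⊆ T.edgeSet)
    (hD : (D : Set (Sym2 V)) ⊆ T.edgeSet) (hne : D.Nonempty) :
    edgeHull T D = B ↔ IsSubtreeSet T B ∧ D ∈ Icc (leafEdges (B : Set (Sym2 V))).toFinset B := by
  rw [edgeHull_eq_iff hT hB hD hne, mem_Icc, Set.toFinset_subset]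

open Classical in
theorem sum_filter_edgeHull_eq {M : Type*} [AddCommMonoid M] (hT : T.IsTree)
    (hB : (B : Set (Sym2 V)) ⊆ T.edgeSet) {w : Finset (Sym2 V) → M} (hw : w ∅ = 0) :
    ∑ D ∈ T.edgeFinset.powerset with edgeHull T D = B, w D =
      if IsSubtreeSet T B then ∑ D ∈ Icc (leafEdges (B : Set (Sym2 V))).toFinset B, w D else 0 := by
  set L := (leafEdges (B : Set (Sym2 V))).toFinset
  have hterm (D : Finset (Sym2 V)) (hD : D ∈ T.edgeFinset.powerset) :
      (if edgeHull T D = B then w D else 0) =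
        if IsSubtreeSet T B ∧ D ∈ Icc L B then w D else 0 := by
    obtain rfl | hne := D.eq_empty_or_nonempty
    · simp only [hw, ite_self]
    · have hDT := subset_edgeFinset_iff.1 (mem_powerset.1 hD)
      simp only [edgeHull_eq_iff_mem_Icc hT hB hDT hne, L]
  have hIcc : T.edgeFinset.powerset ∩ Icc L B = Icc L B :=
    inter_eq_right.2 fun D hD ↦
      mem_powerset.2 ((mem_Icc.1 hD).2.trans (subset_edgeFinset_iff.2 hB))
  rw [sum_filter, sum_congr rfl hterm]
  simp only [ite_and, sum_ite_irrel, sum_const_zero, sum_ite_mem, hIcc]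

open Classical in
theorem sum_leafWeight_filter_edgeHull_eq (hT : T.IsTree)
    (hB : (B : Set (Sym2 V)) ⊆ T.edgeSet) :
    ∑ D ∈ T.edgeFinset.powerset with edgeHull T D = B, leafWeight #B j D =
      if IsSubtreeSet T B ∧ (leafEdges (B : Set (Sym2 V))).ncard = j then (-1) ^ j else 0 := by
  rw [sum_filter_edgeHull_eq hT hB leafWeight_empty]
  set L := (leafEdges (B : Set (Sym2 V))).toFinset
  by_cases hsub : IsSubtreeSet T B
  · have hL : L.Nonempty := by
      have hedge := edgeSet_fromEdgeSet_of_subset hB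
      have hleaf := leafEdges_edgeSet_nonempty
        (hT.isAcyclic.anti (fromEdgeSet_le_of_subset hB)) (hedge.symm ▸ hsub.1)
      rwa [Set.toFinset_nonempty, ← hedge]
    have hmem : L ∈ B.powersetCard j ↔ (leafEdges (B : Set (Sym2 V))).ncard = j := by
      rw [mem_powersetCard, Set.toFinset_subset, Set.ncard_eq_toFinset_card']
      exact and_iff_right fun e he ↦ he.1
    simp only [hsub, if_true, true_and, sum_Icc_leafWeight hL, hmem]
  · simp only [hsub, if_false, false_and]

open Classical in
theorem sum_neg_one_pow_mul_phi_edgeSetType (hT : T.IsTree) (i j : ℕ) :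
    ∑ A ∈ T.edgeFinset.powerset, (-1) ^ #A * phi (Fintype.card V) (edgeSetType A) i j =
      #((T.edgeFinset.powersetCard i).filter fun B : Finset (Sym2 V) ↦
        IsSubtreeSet T B ∧ (leafEdges (B : Set (Sym2 V))).ncard = j) :=
  calc ∑ A ∈ T.edgeFinset.powerset, (-1) ^ #A * phi (Fintype.card V) (edgeSetType A) i j
      = (-1) ^ (i + j) * ∑ A ∈ T.edgeFinset.powerset,
          (-1) ^ #A * #{B ∈ T.edgeFinset.powersetCard i | A ⊆ B} *
            ∑ D ∈ T.edgeFinset.powerset with edgeHull T D ⊆ A, leafWeight i j D := by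
        rw [mul_sum]
        refine sum_congr rfl fun A hA ↦ ?_
        rw [phi_edgeSetType hT (subset_edgeFinset_iff.1 (mem_powerset.1 hA))]
        ring
    _ = (-1) ^ (i + j) * ∑ B ∈ T.edgeFinset.powersetCard i, (-1) ^ #B *
          ∑ D ∈ T.edgeFinset.powerset with edgeHull T D = B, leafWeight i j D := by
        rw [sum_powerset_mul_card_filter_subset_mul_sum_filter_subset fun B hB ↦
          (mem_powersetCard.1 hB).1]
    _ = ∑ B ∈ T.edgeFinset.powersetCard i,
          if IsSubtreeSet T B ∧ (leafEdges (B : Set (Sym2 V))).ncard = j then 1 else 0 := by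
        rw [mul_sum]
        refine sum_congr rfl fun B hB ↦ ?_
        obtain ⟨hBT, rfl⟩ := mem_powersetCard.1 hB
        rw [sum_leafWeight_filter_edgeHull_eq hT (subset_edgeFinset_iff.1 hBT), ← mul_assoc,
          mul_ite, mul_zero, mul_assoc, ← pow_add, ← mul_pow, neg_mul_neg, one_mul, one_pow]
    _ = _ := sum_boole ..

end LeafCounts

open Classical in
/-- Let `T` be a tree with `n` vertices and `1 ≤ j ≤ i ≤ n−1`.  Then the number of subtrees `S`
of `T` with `i` edges and `j` leaf edges equals `Σ_{λ ⊢ n} φ(λ,i,j)·c_λ(T)`. -/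
theorem stmt_9 [Fintype V] (T : SimpleGraph V) (hT : T.IsTree)
    (i j : ℕ) (hj : 1 ≤ j) (hji : j ≤ i) (hi : i ≤ Fintype.card V - 1) :
    (((Finset.univ : Finset (Sym2 V)).powerset.filter
        (fun (S : Finset (Sym2 V)) => IsSubtreeSet T (↑S : Set (Sym2 V)) ∧
          S.card = i ∧ (leafEdges (↑S : Set (Sym2 V))).ncard = j)).card : ℤ) =
      ∑ p : (Fintype.card V).Partition,
        phi (Fintype.card V) p.parts i j * cCoeff T p.parts := by
  have hfilter : univ.filter (fun S : Finset (Sym2 V) ↦ IsSubtreeSet T S ∧ #S = i ∧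
        (leafEdges (S : Set (Sym2 V))).ncard = j) =
      (T.edgeFinset.powersetCard i).filter fun S : Finset (Sym2 V) ↦
        IsSubtreeSet T S ∧ (leafEdges (S : Set (Sym2 V))).ncard = j := by
    ext S
    have hST (hS : IsSubtreeSet T S) : S ⊆ T.edgeFinset := subset_edgeFinset_iff.2 hS.2.1
    simp only [mem_filter, mem_univ, mem_powersetCard]
    tauto
  rw [powerset_univ, hfilter, ← sum_neg_one_pow_mul_phi_edgeSetType hT]
  exact (sum_mul_cCoeff T fun lam ↦ phi (Fintype.card V) lam i j).symm
end

section
/- Let T and U be spiders (trees with exactly one vertex of degree at least 3). Suppose that for all integers i, j, the number of subtrees of T with exactly i edges and exactly j leaf edges equals the number of subtrees of U with exactly i edges and exactly j leaf edges (i.e., T and U have the same subtree polynomial). Then T and U are isomorphic as graphs. -/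
open SimpleGraph Finset

variable {V : Type*} {W : Type*}

/-- A spider is a tree with exactly one vertex of degree at least 3. -/
def IsSpider [Fintype V] (T : SimpleGraph V) [DecidableRel T.Adj] : Prop :=
  T.IsTree ∧ ∃! v : V, 3 ≤ T.degree v

open Classical in
/-- `subtreeCount T i j` : the number of subtrees of `T` with exactly `i` edges and exactly
`j` leaf edges (the coefficient of `q^i r^j` in the subtree polynomial `S_T(q,r)`). -/
noncomputable def subtreeCount [Fintype V] (T : SimpleGraph V) (i j : ℕ) : ℕ :=
  ((Finset.univ : Finset (Sym2 V)).powerset.filter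
    (fun (S : Finset (Sym2 V)) => IsSubtreeSet T (↑S : Set (Sym2 V)) ∧
      S.card = i ∧ (leafEdges (↑S : Set (Sym2 V))).ncard = j)).card
/-!
In a spider with center `c` and `d ≥ 3` legs of lengths `a k`, a subtree lying in a single leg has
at most two leaf edges. Any other subtree contains, on each leg it meets, an initial segment of that
leg, and its leaf edges are the last edges of these segments. So `d` is the largest number of leaf
edges of a subtree, and the subtrees attaining it correspond to the vectors `b` with
`1 ≤ b k ≤ a k`. Counting them by number of edges gives the polynomial
`∏ k, (X + ⋯ + X ^ a k)`, and hence `∏ k, (X ^ a k - 1)`. If two such products agree, evaluation at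
primitive roots of unity shows that every exponent on one side divides one on the other side; so
the largest exponents coincide and can be cancelled. The multiset of leg lengths is thus determined,
and with it the spider.
-/

section Geodesics

variable {T : SimpleGraph V} {c x y : V} {i j n : ℕ}

/-- The vertex at distance `i` from the root `c` on a chosen geodesic from `c` to `x`; for
`i ≥ T.dist c x` this is `x` itself. In a tree the geodesic is the unique path. -/
noncomputable def ancestor (hT : T.Connected) (c x : V) (i : ℕ) : V :=
  (hT.exists_walk_length_eq_dist c x).choose.getVert i

lemma ancestor_zero (hT : T.Connected) : ancestor hT c x 0 = c :=
  Walk.getVert_zero _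

lemma ancestor_dist (hT : T.Connected) : ancestor hT c x (T.dist c x) = x :=
  Walk.getVert_of_length_le _ (hT.exists_walk_length_eq_dist c x).choose_spec.le

lemma adj_ancestor (hT : T.Connected) (hi : i < T.dist c x) :
    T.Adj (ancestor hT c x i) (ancestor hT c x (i + 1)) :=
  Walk.adj_getVert_succ _ (by rwa [(hT.exists_walk_length_eq_dist c x).choose_spec])

lemma adj_ancestor_of_dist (hT : T.Connected) (hx : T.dist c x = n + 1) :
    T.Adj (ancestor hT c x n) x := by
  have hadj := adj_ancestor hT (hx ▸ Nat.lt_succ_self n : n < T.dist c x)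
  rwa [← hx, ancestor_dist] at hadj

lemma dist_ancestor (hT : T.Connected) (hi : i ≤ T.dist c x) :
    T.dist c (ancestor hT c x i) = i := by
  set p := (hT.exists_walk_length_eq_dist c x).choose
  have hp : p.length = T.dist c x := (hT.exists_walk_length_eq_dist c x).choose_spec
  have htake := length_eq_dist_of_subwalk hp (p.isSubwalk_take i)
  rw [Walk.take_length, hp, min_eq_left hi] at htake
  exact htake.symm

lemma getVert_eq_ancestor (hT : T.IsTree) {p : T.Walk c x} (hp : p.length = T.dist c x) :
    p.getVert i = ancestor hT.connected c x i := by
  let q := (hT.connected.exists_walk_length_eq_dist c x).choose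
  have hq : q.length = T.dist c x :=
    (hT.connected.exists_walk_length_eq_dist c x).choose_spec
  have hpq : p = q := (hT.existsUnique_path c x).unique
    (p.isPath_of_length_eq_dist hp) (q.isPath_of_length_eq_dist hq)
  rw [hpq]
  rfl

lemma ancestor_ancestor (hT : T.IsTree) (hij : i ≤ j) :
    ancestor hT.connected c (ancestor hT.connected c x j) i = ancestor hT.connected c x i := by
  set p := (hT.connected.exists_walk_length_eq_dist c x).choose
  have hp : p.length = T.dist c x :=
    (hT.connected.exists_walk_length_eq_dist c x).choose_spec
  have htake : (p.take j).getVert i = ancestor hT.connected c (p.getVert j) i :=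
    getVert_eq_ancestor hT (length_eq_dist_of_subwalk hp (p.isSubwalk_take j))
  rw [Walk.take_getVert, min_eq_right hij] at htake
  exact htake.symm

lemma ancestor_dist_of_adj (hT : T.IsTree) (hxy : T.Adj x y) (hd : T.dist c y = T.dist c x + 1) :
    ancestor hT.connected c y (T.dist c x) = x := by
  obtain ⟨p, hp⟩ := hT.connected.exists_walk_length_eq_dist c x
  have hlen : (p.concat hxy).length = T.dist c y := by rw [Walk.length_concat, hp, hd]
  rw [← getVert_eq_ancestor hT hlen, Walk.concat_eq_append, Walk.getVert_append, hp,
    if_neg (lt_irrefl _), Nat.sub_self, Walk.getVert_zero]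

lemma mk_ancestor_eq_of_adj {t : V} (hT : T.IsTree) (hxy : T.Adj x y)
    (hd : T.dist c y = T.dist c x + 1) (ht : ancestor hT.connected c t (T.dist c y) = y) :
    s(ancestor hT.connected c t (T.dist c x), ancestor hT.connected c t (T.dist c x + 1)) =
      s(x, y) := by
  have hx := ancestor_dist_of_adj hT hxy hd
  rw [← ht, ancestor_ancestor hT (by lia)] at hx
  rw [hx, ← hd, ht]

/-- Two distinct vertices with a common parent `z ≠ c` would give `z` the degree 3. -/
lemma eq_of_ancestor_one_eq [T.LocallyFinite] (hT : T.IsTree) (hdeg : ∀ z ≠ c, T.degree z ≤ 2)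
    (hx : T.dist c x = n + 1) (hy : T.dist c y = n + 1)
    (hxy : ancestor hT.connected c x 1 = ancestor hT.connected c y 1) : x = y := by
  induction n generalizing x y with
  | zero => rw [← ancestor_dist hT.connected (x := x), ← ancestor_dist hT.connected (x := y),
      hx, hy, hxy]
  | succ n ih =>
    let z := ancestor hT.connected c x (n + 1)
    have hdz : T.dist c z = n + 1 := dist_ancestor _ (by lia)
    have hzy : z = ancestor hT.connected c y (n + 1) :=
      ih hdz (dist_ancestor _ (by lia))
        (by rw [ancestor_ancestor hT (by lia), ancestor_ancestor hT (by lia), hxy])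
    have hzx_adj : T.Adj z x := adj_ancestor_of_dist hT.connected hx
    have hzy_adj : T.Adj z y := hzy ▸ adj_ancestor_of_dist hT.connected hy
    let w := ancestor hT.connected c z n
    have hdw : T.dist c w = n := dist_ancestor _ (by lia)
    have hwz_adj : T.Adj w z := adj_ancestor_of_dist hT.connected hdz
    have hzc : z ≠ c := by rintro h; simp [h] at hdz
    by_contra hne
    refine (hdeg z hzc).not_gt (Finset.two_lt_card.2
      ⟨x, (T.mem_neighborFinset z x).2 hzx_adj, y, (T.mem_neighborFinset z y).2 hzy_adj,
        w, (T.mem_neighborFinset z w).2 hwz_adj.symm, hne, fun h => ?_, fun h => ?_⟩)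
    · rw [h] at hx; lia
    · rw [h] at hy; lia

end Geodesics

section Subtrees

lemma IsSubtreeSet.propagate {T : SimpleGraph V} {S : Set (Sym2 V)} (hS : IsSubtreeSet T S)
    {P : V → Prop} (hP : ∀ x y, s(x, y) ∈ S → P x → P y) {e e' : Sym2 V} {x y : V} (he : e ∈ S)
    (hx : x ∈ e) (he' : e' ∈ S) (hy : y ∈ e') (h : P x) : P y := by
  have hwalk {x y : {v | ∃ e ∈ S, v ∈ e}}
      (p : ((SimpleGraph.fromEdgeSet S).induce {v | ∃ e ∈ S, v ∈ e}).Walk x y) :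
      P x → P y := by
    induction p with
    | nil => exact id
    | cons hadj _ ih => exact fun hx => ih (hP _ _ ((fromEdgeSet_adj S).1 hadj).1 hx)
  obtain ⟨p⟩ := hS.2.2.preconnected ⟨x, e, he, hx⟩ ⟨y, e', he', hy⟩
  exact hwalk p h

lemma mk_notMem_leafEdges {S : Set (Sym2 V)} {x y : V} {e e' : Sym2 V} (he : e ∈ S) (hx : x ∈ e)
    (hne : e ≠ s(x, y)) (he' : e' ∈ S) (hy : y ∈ e') (hne' : e' ≠ s(x, y)) :
    s(x, y) ∉ leafEdges S := by
  rintro ⟨-, z, hz, hleaf⟩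
  obtain rfl | rfl := Sym2.mem_iff.1 hz
  · exact hne (hleaf e he hx)
  · exact hne' (hleaf e' he' hy)

lemma subtreeCount_eq_ncard [Fintype V] (T : SimpleGraph V) (i j : ℕ) :
    subtreeCount T i j =
      {S : Set (Sym2 V) | IsSubtreeSet T S ∧ S.ncard = i ∧ (leafEdges S).ncard = j}.ncard := by
  classical
  rw [subtreeCount, ← Set.ncard_coe_finset,
    ← Set.ncard_image_of_injective _ (Finset.coe_injective (α := Sym2 V))]
  congr 1
  ext S
  simp only [Finset.coe_filter, Finset.powerset_univ, Finset.mem_univ, true_and, Set.mem_image,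
    Set.mem_ofPred_eq]
  constructor
  · rintro ⟨F, hF, rfl⟩
    rwa [Set.ncard_coe_finset]
  · intro hS
    refine ⟨S.toFinite.toFinset, ?_, S.toFinite.coe_toFinset⟩
    rwa [← Set.ncard_coe_finset, S.toFinite.coe_toFinset]

end Subtrees

section Legs

variable {ι κ : Type*}

/-- The edge joining the vertices at positions `i` and `i + 1` of leg `k`. -/
def legEdge (v : ι → ℕ → V) (k : ι) (i : ℕ) : Sym2 V :=
  s(v k i, v k (i + 1))

/-- The set formed by the first `b k` edges of each leg `k`. -/
def legSet (v : ι → ℕ → V) (b : ι → ℕ) : Set (Sym2 V) :=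
  {e | ∃ k, ∃ i < b k, legEdge v k i = e}

/-- The legs of a spider: `v k i` is the vertex at distance `i` from the center `c` on leg `k`,
and `a k` is the length of leg `k`. The values `v k i` with `i > a k` are irrelevant. -/
structure IsLegs (T : SimpleGraph V) (c : V) (a : ι → ℕ) (v : ι → ℕ → V) : Prop where
  apply_zero (k : ι) : v k 0 = c
  length_pos (k : ι) : 0 < a k
  zero_or_eq_of_apply_eq {k k' : ι} {i j : ℕ} (hi : i ≤ a k) (hj : j ≤ a k')
    (h : v k i = v k' j) : i = 0 ∧ j = 0 ∨ k = k' ∧ i = j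
  exists_apply_eq (x : V) : ∃ k, ∃ i ≤ a k, v k i = x
  edgeSet_eq : T.edgeSet = legSet v a

lemma exists_mem_legSet {v : ι → ℕ → V} {b : ι → ℕ} {k : ι} {i : ℕ} (hk : 0 < b k)
    (hi : i ≤ b k) : ∃ e ∈ legSet v b, v k i ∈ e := by
  cases i with
  | zero => exact ⟨_, ⟨k, 0, hk, rfl⟩, Sym2.mem_mk_left _ _⟩
  | succ i => exact ⟨_, ⟨k, i, hi, rfl⟩, Sym2.mem_mk_right _ _⟩

/-- The witness is a vertex of maximal depth above `k`, the end of the leg through `k`. -/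
lemma exists_tip [Finite V] {T : SimpleGraph V} [T.LocallyFinite] {c : V} (hT : T.IsTree)
    (hdeg : ∀ z ≠ c, T.degree z ≤ 2) (k : T.neighborSet c) :
    ∃ t, t ≠ c ∧ ancestor hT.connected c t 1 = k ∧
      ∀ x ≠ c, ancestor hT.connected c x 1 = k →
        T.dist c x ≤ T.dist c t ∧ ancestor hT.connected c t (T.dist c x) = x := by
  have hk : T.dist c k = 1 := dist_eq_one_iff_adj.2 k.2
  obtain ⟨t, ⟨htc, htk⟩, hmax⟩ := Set.exists_max_image
    {x | x ≠ c ∧ ancestor hT.connected c x 1 = k} (T.dist c) (Set.toFinite _)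
    ⟨k, k.2.ne', by simpa only [hk] using ancestor_dist hT.connected (c := c) (x := k)⟩
  refine ⟨t, htc, htk, fun x hxc hxk => ?_⟩
  have hle : T.dist c x ≤ T.dist c t := hmax x ⟨hxc, hxk⟩
  have hpos : 0 < T.dist c x := hT.connected.pos_dist_of_ne hxc.symm
  refine ⟨hle, eq_of_ancestor_one_eq (n := T.dist c x - 1) hT hdeg ?_ (by lia) ?_⟩
  · rw [dist_ancestor _ hle]; lia
  · rw [ancestor_ancestor hT hpos, htk, hxk]

lemma exists_isLegs [Finite V] [Nontrivial V] {T : SimpleGraph V} [T.LocallyFinite] {c : V}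
    (hT : T.IsTree) (hdeg : ∀ z ≠ c, T.degree z ≤ 2) :
    ∃ (a : T.neighborSet c → ℕ) (v : T.neighborSet c → ℕ → V), IsLegs T c a v := by
  have hconn := hT.connected
  choose tip htip_ne htip_one htip using exists_tip hT hdeg
  have hdist {k i} (hi : i ≤ T.dist c (tip k)) : T.dist c (ancestor hconn c (tip k) i) = i :=
    dist_ancestor hconn hi
  have hsurj {x} (hx : x ≠ c) : ∃ k, T.dist c x ≤ T.dist c (tip k) ∧
      ancestor hconn c (tip k) (T.dist c x) = x := by
    have hadj := adj_ancestor hconn (hconn.pos_dist_of_ne hx.symm)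
    rw [ancestor_zero] at hadj
    exact ⟨⟨_, hadj⟩, htip _ x hx rfl⟩
  refine ⟨fun k => T.dist c (tip k), fun k => ancestor hconn c (tip k), fun k => ancestor_zero _,
    fun k => hconn.pos_dist_of_ne (htip_ne k).symm, ?_, fun x => ?_, ?_⟩
  · intro k k' i j hi hj h
    obtain rfl : i = j := by rw [← hdist hi, h, hdist hj]
    refine i.eq_zero_or_pos.imp (fun h0 => ⟨h0, h0⟩) fun hpos => ⟨Subtype.ext ?_, rfl⟩
    rw [← htip_one k, ← htip_one k', ← ancestor_ancestor hT hpos, h, ancestor_ancestor hT hpos]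
  · obtain rfl | hx := eq_or_ne x c
    · obtain ⟨y, hy⟩ := exists_ne x
      exact ⟨(hsurj hy).choose, 0, Nat.zero_le _, ancestor_zero _⟩
    · obtain ⟨k, hk⟩ := hsurj hx
      exact ⟨k, _, hk⟩
  · have hsub {x y} (hxy : T.Adj x y) (hd : T.dist c y = T.dist c x + 1) :
        s(x, y) ∈ legSet (fun k => ancestor hconn c (tip k)) fun k => T.dist c (tip k) := by
      obtain ⟨k, hle, hk⟩ := hsurj (x := y) (by rintro rfl; simp at hd)
      exact ⟨k, T.dist c x, by lia, mk_ancestor_eq_of_adj hT hxy hd hk⟩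
    ext e
    constructor
    · induction e with
      | _ x y =>
        intro hxy
        obtain hd | hd := hT.dist_eq_dist_add_one_of_adj c hxy
        · rw [Sym2.eq_swap]
          exact hsub ((mem_edgeSet T).1 hxy).symm hd
        · exact hsub hxy hd
    · rintro ⟨k, i, hi, rfl⟩
      exact adj_ancestor hconn hi

lemma IsSpider.exists_isLegs [Fintype V] {T : SimpleGraph V} [DecidableRel T.Adj]
    (hT : IsSpider T) :
    ∃ (c : V) (a : T.neighborSet c → ℕ) (v : T.neighborSet c → ℕ → V),
      3 ≤ Fintype.card (T.neighborSet c) ∧ IsLegs T c a v := by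
  obtain ⟨htree, c, hc, hunique⟩ := hT
  have hdeg : ∀ z ≠ c, T.degree z ≤ 2 := fun z hz =>
    Nat.le_of_lt_succ (not_le.1 fun h => hz (hunique z h))
  obtain ⟨x, hx⟩ := (T.degree_pos_iff_exists_adj c).1 (by lia)
  have : Nontrivial V := ⟨c, x, hx.ne⟩
  obtain ⟨a, v, hL⟩ := _root_.exists_isLegs htree hdeg
  exact ⟨c, a, v, by rwa [card_neighborSet_eq_degree], hL⟩

namespace IsLegs

section Iso

variable {T : SimpleGraph V} {U : SimpleGraph W} {c : V} {c' : W} {a : ι → ℕ} {b : κ → ℕ}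
  {v : ι → ℕ → V} {w : κ → ℕ → W}

lemma reindex (hL : IsLegs U c' b w) (σ : ι ≃ κ) : IsLegs U c' (b ∘ σ) (w ∘ σ) where
  apply_zero k := hL.apply_zero (σ k)
  length_pos k := hL.length_pos (σ k)
  zero_or_eq_of_apply_eq hi hj h :=
    (hL.zero_or_eq_of_apply_eq hi hj h).imp_right (And.imp_left (σ.injective ·))
  exists_apply_eq x := σ.surjective.exists.1 (hL.exists_apply_eq x)
  edgeSet_eq := hL.edgeSet_eq.trans (Set.ext fun _ => σ.surjective.exists)

lemma exists_map_apply_eq (hT : IsLegs T c a v) {w : ι → ℕ → W} (hw : ∀ k, w k 0 = c') :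
    ∃ f : V → W, ∀ k, ∀ i ≤ a k, f (v k i) = w k i := by
  choose leg depth hdepth hv using hT.exists_apply_eq
  refine ⟨fun x => w (leg x) (depth x), fun k i hi => ?_⟩
  obtain ⟨h, rfl⟩ | ⟨h, h'⟩ := hT.zero_or_eq_of_apply_eq (hdepth _) hi (hv (v k i))
  · simp only [h, hw]
  · simp only [h, h']

lemma adj_map (hT : IsLegs T c a v) {w : ι → ℕ → W} (hU : IsLegs U c' a w) {f : V → W}
    (hf : ∀ k, ∀ i ≤ a k, f (v k i) = w k i) {x y : V} (hxy : T.Adj x y) : U.Adj (f x) (f y) := by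
  rw [← mem_edgeSet, hT.edgeSet_eq] at hxy
  obtain ⟨k, i, hi, h⟩ := hxy
  rw [← mem_edgeSet, hU.edgeSet_eq]
  refine ⟨k, i, hi, ?_⟩
  rw [legEdge, ← hf k i hi.le, ← hf k (i + 1) hi, ← Sym2.map_mk, ← legEdge, h, Sym2.map_mk]

lemma nonempty_iso (hT : IsLegs T c a v) {w : ι → ℕ → W} (hU : IsLegs U c' a w) :
    Nonempty (T ≃g U) := by
  obtain ⟨f, hf⟩ := hT.exists_map_apply_eq hU.apply_zero
  obtain ⟨g, hg⟩ := hU.exists_map_apply_eq hT.apply_zero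
  have hgf (x : V) : g (f x) = x := by
    obtain ⟨k, i, hi, rfl⟩ := hT.exists_apply_eq x
    rw [hf k i hi, hg k i hi]
  have hfg (y : W) : f (g y) = y := by
    obtain ⟨k, i, hi, rfl⟩ := hU.exists_apply_eq y
    rw [hg k i hi, hf k i hi]
  refine ⟨⟨⟨f, g, hgf, hfg⟩, fun {x y} => ⟨fun h => ?_, hT.adj_map hU hf⟩⟩⟩
  simpa only [Equiv.coe_fn_mk, hgf] using hU.adj_map hT hg h

end Iso

section LegSet

variable {T : SimpleGraph V} {c : V} {a b : ι → ℕ} {v : ι → ℕ → V} {S : Set (Sym2 V)}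
  {k k' : ι} {i j l : ℕ}

lemma zero_or_eq_of_mem_legEdge (hL : IsLegs T c a v) (hi : i ≤ a k) (hj : j < a k')
    (h : v k i ∈ legEdge v k' j) : i = 0 ∧ j = 0 ∨ k = k' ∧ (i = j ∨ i = j + 1) := by
  obtain h | h := Sym2.mem_iff.1 h
  · exact (hL.zero_or_eq_of_apply_eq hi hj.le h).imp_right (And.imp_right Or.inl)
  · obtain h | h := hL.zero_or_eq_of_apply_eq hi hj h
    · lia
    · exact Or.inr (h.imp_right Or.inr)

lemma legEdge_inj (hL : IsLegs T c a v) (hi : i < a k) (hj : j < a k') :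
    legEdge v k i = legEdge v k' j ↔ k = k' ∧ i = j := by
  refine ⟨fun h => ?_, by rintro ⟨rfl, rfl⟩; rfl⟩
  have h₁ := hL.zero_or_eq_of_mem_legEdge hi hj (h ▸ Sym2.mem_mk_right _ _)
  have h₂ := hL.zero_or_eq_of_mem_legEdge hj hi (h ▸ Sym2.mem_mk_right _ _)
  lia

lemma legEdge_mem_legSet_iff (hL : IsLegs T c a v) (hb : b ≤ a) (hi : i < a k) :
    legEdge v k i ∈ legSet v b ↔ i < b k := by
  refine ⟨?_, fun h => ⟨k, i, h, rfl⟩⟩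
  rintro ⟨k', j, hj, h⟩
  obtain ⟨rfl, rfl⟩ := (hL.legEdge_inj (hj.trans_le (hb k')) hi).1 h
  exact hj

lemma injOn_legSet (hL : IsLegs T c a v) : Set.InjOn (legSet v) (Set.Iic a) := by
  have hle {b b' : ι → ℕ} (hb : b ≤ a) (hb' : b' ≤ a) (h : legSet v b = legSet v b') :
      b ≤ b' := fun k => le_of_forall_lt fun i hi => by
    have hia : i < a k := hi.trans_le (hb k)
    rwa [← hL.legEdge_mem_legSet_iff hb' hia, ← h, hL.legEdge_mem_legSet_iff hb hia]
  exact fun b hb b' hb' h => le_antisymm (hle hb hb' h) (hle hb' hb h.symm)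

lemma ncard_legSet [Fintype ι] (hL : IsLegs T c a v) (hb : b ≤ a) :
    (legSet v b).ncard = ∑ k, b k := by
  have himage : legSet v b = (fun p : Σ _ : ι, ℕ => legEdge v p.1 p.2) ''
      (univ.sigma fun k => range (b k) : Finset _) := by
    ext e
    simp [legSet]
  rw [himage, Set.InjOn.ncard_image, Set.ncard_coe_finset, Finset.card_sigma]
  · simp only [Finset.card_range]
  · rintro ⟨k, i⟩ hi ⟨k', j⟩ hj h
    simp only [Finset.coe_sigma, Set.mem_sigma_iff, Finset.mem_coe, Finset.mem_univ,
      Finset.mem_range, true_and] at hi hj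
    obtain ⟨rfl, rfl⟩ := (hL.legEdge_inj (hi.trans_le (hb k)) (hj.trans_le (hb k'))).1 h
    rfl

lemma isSubtreeSet_legSet (hL : IsLegs T c a v) (hb : b ≤ a) (hne : b ≠ 0) :
    IsSubtreeSet T (legSet v b) := by
  obtain ⟨k₀, hk₀⟩ := Function.ne_iff.1 hne
  have hk₀ : 0 < b k₀ := Nat.pos_of_ne_zero hk₀
  refine ⟨⟨_, k₀, 0, hk₀, rfl⟩, ?_, ?_⟩
  · rintro _ ⟨k, i, hi, rfl⟩
    rw [hL.edgeSet_eq]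
    exact ⟨k, i, hi.trans_le (hb k), rfl⟩
  rw [connected_iff_exists_forall_reachable]
  refine ⟨⟨v k₀ 0, exists_mem_legSet hk₀ (Nat.zero_le _)⟩, ?_⟩
  have hreach (k i) (hk : 0 < b k) (hi : i ≤ b k) :
      ((fromEdgeSet (legSet v b)).induce {x | ∃ e ∈ legSet v b, x ∈ e}).Reachable
        ⟨v k₀ 0, exists_mem_legSet hk₀ (Nat.zero_le _)⟩ ⟨v k i, exists_mem_legSet hk hi⟩ := by
    induction i with
    | zero => simp only [hL.apply_zero]; rfl
    | succ i ih =>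
      refine (ih (by lia)).trans (Adj.reachable ((fromEdgeSet_adj _).2 ⟨⟨k, i, hi, rfl⟩, ?_⟩))
      intro h
      have hi_le : i + 1 ≤ a k := hi.trans (hb k)
      have := hL.zero_or_eq_of_apply_eq (by lia) hi_le h
      lia
  rintro ⟨x, _, ⟨k, i, hi, rfl⟩, hx⟩
  obtain rfl | rfl := Sym2.mem_iff.1 hx
  · exact hreach k i (by lia) (by lia)
  · exact hreach k (i + 1) (by lia) hi

lemma eq_and_lt_of_legEdge_notMem (hL : IsLegs T c a v) (hS : IsSubtreeSet T S) (hij : i < j)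
    (hj : j < a k) (hl : l < a k') (hiS : legEdge v k i ∉ S) (hjS : legEdge v k j ∈ S)
    (hlS : legEdge v k' l ∈ S) : k' = k ∧ i < l := by
  have hstep (x y : V) (hxy : s(x, y) ∈ S) :
      (∃ m, i < m ∧ m ≤ a k ∧ v k m = x) → ∃ m, i < m ∧ m ≤ a k ∧ v k m = y := by
    rintro ⟨m, him, hm, rfl⟩
    obtain ⟨k₁, n, hn, he⟩ := hL.edgeSet_eq ▸ hS.2.1 hxy
    obtain h | ⟨rfl, h⟩ := hL.zero_or_eq_of_mem_legEdge hm hn (he ▸ Sym2.mem_mk_left _ _)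
    · lia
    have hne : n ≠ i := by
      rintro rfl
      exact hiS (he ▸ hxy)
    obtain hy | hy := Sym2.mem_iff.1 (he ▸ Sym2.mem_mk_right _ _ : y ∈ legEdge v k n)
    · exact ⟨n, by lia, hn.le, hy.symm⟩
    · exact ⟨n + 1, by lia, hn, hy.symm⟩
  obtain ⟨m, him, hm, h⟩ := hS.propagate hstep hjS (Sym2.mem_mk_right _ _) hlS
    (Sym2.mem_mk_right _ _) ⟨j + 1, by lia, hj, rfl⟩
  obtain h | ⟨rfl, rfl⟩ := hL.zero_or_eq_of_apply_eq hm hl h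
  · lia
  · refine ⟨rfl, (Nat.le_of_lt_succ him).lt_of_ne ?_⟩
    rintro rfl
    exact hiS hlS

lemma legEdge_mem_of_le_of_le (hL : IsLegs T c a v) (hS : IsSubtreeSet T S) (hij : i ≤ j)
    (hjl : j ≤ l) (hl : l < a k) (hiS : legEdge v k i ∈ S) (hlS : legEdge v k l ∈ S) :
    legEdge v k j ∈ S := by
  obtain rfl | hjl := hjl.eq_or_lt
  · exact hlS
  by_contra hjS
  exact hij.not_gt (hL.eq_and_lt_of_legEdge_notMem hS hjl hl (by lia) hjS hlS hiS).2

lemma legEdge_notMem_leafEdges (hL : IsLegs T c a v) (hi : i + 2 < a k)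
    (h₀ : legEdge v k i ∈ S) (h₂ : legEdge v k (i + 2) ∈ S) :
    legEdge v k (i + 1) ∉ leafEdges S := by
  refine mk_notMem_leafEdges h₀ (Sym2.mem_mk_right _ _) ?_ h₂ (Sym2.mem_mk_left _ _) ?_ <;>
  · rw [← legEdge, Ne, hL.legEdge_inj (by lia) (by lia)]
    lia

lemma legEdge_zero_notMem_leafEdges (hL : IsLegs T c a v) (hk : k' ≠ k) (hone : 1 < a k)
    (h₀ : legEdge v k' 0 ∈ S) (h₁ : legEdge v k 1 ∈ S) : legEdge v k 0 ∉ leafEdges S := by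
  refine mk_notMem_leafEdges h₀ ?_ ?_ h₁ (Sym2.mem_mk_left _ _) ?_
  · rw [hL.apply_zero, ← hL.apply_zero k']
    exact Sym2.mem_mk_left _ _
  · rw [← legEdge, Ne, hL.legEdge_inj (hL.length_pos k') (hL.length_pos k)]
    exact fun h => hk h.1
  · rw [← legEdge, Ne, hL.legEdge_inj hone (hL.length_pos k)]
    exact fun h => one_ne_zero h.2

lemma ncard_leafEdges_le_two (hL : IsLegs T c a v) (hS : IsSubtreeSet T S)
    (hk : S ⊆ legEdge v k '' Set.Iio (a k)) : (leafEdges S).ncard ≤ 2 := by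
  set I : Set ℕ := {i | i < a k ∧ legEdge v k i ∈ S}
  have hbdd : BddAbove I := ⟨a k, fun i hi => hi.1.le⟩
  have hsub : leafEdges S ⊆ {legEdge v k (sInf I), legEdge v k (sSup I)} := by
    intro e he
    obtain ⟨i, hi, rfl⟩ := hk he.1
    have hiI : i ∈ I := ⟨hi, he.1⟩
    obtain ⟨-, hminS⟩ := Nat.sInf_mem ⟨i, hiI⟩
    obtain ⟨hmax, hmaxS⟩ := Nat.sSup_mem ⟨i, hiI⟩ hbdd
    obtain hle | hlt := (Nat.sInf_le hiI).eq_or_lt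
    · exact Or.inl (hle ▸ rfl)
    obtain hle' | hlt' := (le_csSup hbdd hiI).eq_or_lt
    · exact Or.inr (hle' ▸ rfl)
    obtain ⟨n, rfl⟩ : ∃ n, i = n + 1 := ⟨i - 1, by lia⟩
    have hmem {j} (h : sInf I ≤ j) (h' : j ≤ sSup I) : legEdge v k j ∈ S :=
      hL.legEdge_mem_of_le_of_le hS h h' hmax hminS hmaxS
    exact absurd he (hL.legEdge_notMem_leafEdges (by lia) (hmem (by lia) (by lia))
      (hmem (by lia) (by lia)))
  exact (Set.ncard_le_ncard hsub (Set.toFinite _)).trans ((Set.ncard_insert_le _ _).trans (by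
    rw [Set.ncard_singleton]))

lemma leafEdges_legSet (hL : IsLegs T c a v) (hb : b ≤ a) (hsupp : b.support.Nontrivial) :
    leafEdges (legSet v b) = (fun k => legEdge v k (b k - 1)) '' b.support := by
  ext e
  constructor
  · intro he
    obtain ⟨k, i, hi, rfl⟩ := he.1
    have hbk := hb k
    obtain rfl | hlt : i = b k - 1 ∨ i + 1 < b k := by lia
    · exact ⟨k, by rw [Function.mem_support]; lia, rfl⟩
    have hnext : legEdge v k (i + 1) ∈ legSet v b := ⟨k, i + 1, hlt, rfl⟩
    cases i with
    | zero =>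
      obtain ⟨k', hk', hne⟩ := hsupp.exists_ne k
      exact absurd he (hL.legEdge_zero_notMem_leafEdges hne (by lia)
        ⟨k', 0, Nat.pos_of_ne_zero hk', rfl⟩ hnext)
    | succ i =>
      exact absurd he (hL.legEdge_notMem_leafEdges (by lia) ⟨k, i, by lia, rfl⟩ hnext)
  · rintro ⟨k, hk, rfl⟩
    have hk : 0 < b k := Nat.pos_of_ne_zero hk
    have hbk := hb k
    refine ⟨⟨k, b k - 1, by lia, rfl⟩, _, Sym2.mem_mk_right _ _, ?_⟩
    rintro _ ⟨k', j, hj, rfl⟩ hmem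
    obtain h | ⟨rfl, h⟩ :=
      hL.zero_or_eq_of_mem_legEdge (by lia) (hj.trans_le (hb k')) hmem
    · lia
    · rw [show j = b k - 1 by lia]

lemma ncard_leafEdges_legSet (hL : IsLegs T c a v) (hb : b ≤ a)
    (hsupp : b.support.Nontrivial) : (leafEdges (legSet v b)).ncard = b.support.ncard := by
  rw [hL.leafEdges_legSet hb hsupp]
  refine Set.InjOn.ncard_image fun k hk k' hk' h => ?_
  rw [Function.mem_support] at hk hk'
  have hbk := hb k
  have hbk' := hb k'
  exact ((hL.legEdge_inj (by lia) (by lia)).1 h).1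

lemma exists_eq_legSet (hL : IsLegs T c a v) (hS : IsSubtreeSet T S)
    (hlegs : ∀ k, ¬ S ⊆ legEdge v k '' Set.Iio (a k)) :
    ∃ b ≤ a, b.support.Nontrivial ∧ S = legSet v b := by
  have hleg {e} (he : e ∈ S) : ∃ k, ∃ i < a k, legEdge v k i = e :=
    hS.2.1.trans hL.edgeSet_eq.subset he
  have hother (k) : ∃ k' ≠ k, ∃ i < a k', legEdge v k' i ∈ S := by
    obtain ⟨e, he, hek⟩ := Set.not_subset.1 (hlegs k)
    obtain ⟨k', i, hi, rfl⟩ := hleg he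
    exact ⟨k', by rintro rfl; exact hek ⟨i, hi, rfl⟩, i, hi, he⟩
  have hlower (k) : IsLowerSet {i | i < a k ∧ legEdge v k i ∈ S} := by
    rintro j i hij ⟨hj, hjS⟩
    refine ⟨hij.trans_lt hj, ?_⟩
    by_contra hiS
    obtain ⟨k', hne, l, hl, hlS⟩ := hother k
    have hlt : i < j := hij.lt_of_ne (by rintro rfl; exact hiS hjS)
    exact hne (hL.eq_and_lt_of_legEdge_notMem hS hlt hj hl hiS hjS hlS).1
  have hIio (k) : ∃ n, {i | i < a k ∧ legEdge v k i ∈ S} = Set.Iio n :=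
    (hlower k).eq_univ_or_Iio.resolve_left fun h =>
      lt_irrefl _ (h ▸ Set.mem_univ (a k) : a k ∈ {i | i < a k ∧ legEdge v k i ∈ S}).1
  choose b hb using hIio
  have hmem {k i} : (i < a k ∧ legEdge v k i ∈ S) ↔ i < b k := Set.ext_iff.1 (hb k) i
  have hpos {k i} (hi : i < a k) (hiS : legEdge v k i ∈ S) : b k ≠ 0 :=
    Nat.ne_zero_of_lt (hmem.1 ⟨hi, hiS⟩)
  refine ⟨b, fun k => le_of_forall_lt fun i hi => (hmem.2 hi).1, ?_, ?_⟩
  · obtain ⟨e, he⟩ := hS.1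
    obtain ⟨k, i, hi, rfl⟩ := hleg he
    obtain ⟨k', hne, j, hj, hjS⟩ := hother k
    exact ⟨k', hpos hj hjS, k, hpos hi he, hne⟩
  · ext e
    refine ⟨fun he => ?_, ?_⟩
    · obtain ⟨k, i, hi, rfl⟩ := hleg he
      exact ⟨k, i, hmem.1 ⟨hi, he⟩, rfl⟩
    · rintro ⟨k, i, hi, rfl⟩
      exact (hmem.2 hi).2

variable [Fintype ι]

lemma ncard_leafEdges_le (hL : IsLegs T c a v) (hι : 3 ≤ Fintype.card ι)
    (hS : IsSubtreeSet T S) : (leafEdges S).ncard ≤ Fintype.card ι := by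
  by_cases hlegs : ∃ k, S ⊆ legEdge v k '' Set.Iio (a k)
  · obtain ⟨k, hk⟩ := hlegs
    have := hL.ncard_leafEdges_le_two hS hk
    lia
  · obtain ⟨b, hb, hsupp, rfl⟩ := hL.exists_eq_legSet hS (not_exists.1 hlegs)
    rw [hL.ncard_leafEdges_legSet hb hsupp, ← Nat.card_eq_fintype_card]
    exact Set.ncard_le_card _

lemma ncard_leafEdges_eq_card_iff (hL : IsLegs T c a v) (hι : 3 ≤ Fintype.card ι)
    (hS : IsSubtreeSet T S) :
    (leafEdges S).ncard = Fintype.card ι ↔ ∃ b ∈ Set.Icc 1 a, legSet v b = S := by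
  constructor
  · intro hcard
    obtain ⟨b, hb, hsupp, rfl⟩ := hL.exists_eq_legSet hS fun k hk => by
      have := hL.ncard_leafEdges_le_two hS hk
      lia
    rw [hL.ncard_leafEdges_legSet hb hsupp, ← Nat.card_eq_fintype_card,
      ← Set.eq_univ_iff_ncard] at hcard
    have hone : 1 ≤ b := fun k => Nat.one_le_iff_ne_zero.2 (Set.eq_univ_iff_forall.1 hcard k)
    exact ⟨b, ⟨hone, hb⟩, rfl⟩
  · rintro ⟨b, ⟨hone, hb⟩, rfl⟩
    have hsupp : b.support = Set.univ :=
      Set.eq_univ_of_forall fun k => Nat.one_le_iff_ne_zero.1 (hone k)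
    have : Nontrivial ι := Fintype.one_lt_card_iff_nontrivial.1 (by lia)
    rw [hL.ncard_leafEdges_legSet hb (hsupp ▸ Set.nontrivial_univ), hsupp, Set.ncard_univ,
      Nat.card_eq_fintype_card]

lemma subtreeCount_card [Fintype V] [DecidableEq ι] (hL : IsLegs T c a v)
    (hι : 3 ≤ Fintype.card ι) (n : ℕ) :
    subtreeCount T n (Fintype.card ι) = #{b ∈ Finset.Icc 1 a | ∑ k, b k = n} := by
  have : Nonempty ι := Fintype.card_pos_iff.1 (by lia)
  have himage : {S | IsSubtreeSet T S ∧ S.ncard = n ∧ (leafEdges S).ncard = Fintype.card ι} =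
      legSet v '' ({b ∈ Finset.Icc 1 a | ∑ k, b k = n} : Finset (ι → ℕ)) := by
    ext S
    simp only [Finset.coe_filter, Finset.mem_Icc, Set.mem_image, Set.mem_ofPred_eq]
    constructor
    · rintro ⟨hS, hn, hcard⟩
      obtain ⟨b, hb, rfl⟩ := (hL.ncard_leafEdges_eq_card_iff hι hS).1 hcard
      exact ⟨b, ⟨hb, hL.ncard_legSet hb.2 ▸ hn⟩, rfl⟩
    · rintro ⟨b, ⟨hb, hn⟩, rfl⟩
      have hS := hL.isSubtreeSet_legSet hb.2 (by rintro rfl; exact absurd hb.1 (by simp))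
      exact ⟨hS, (hL.ncard_legSet hb.2).trans hn,
        (hL.ncard_leafEdges_eq_card_iff hι hS).2 ⟨b, hb, rfl⟩⟩
  rw [subtreeCount_eq_ncard, himage, Set.InjOn.ncard_image, Set.ncard_coe_finset]
  refine hL.injOn_legSet.mono fun b hb => ?_
  exact (Finset.mem_Icc.1 (Finset.mem_filter.1 hb).1).2

lemma isGreatest_card [Fintype V] (hL : IsLegs T c a v) (hι : 3 ≤ Fintype.card ι) :
    IsGreatest {j | ∃ i, subtreeCount T i j ≠ 0} (Fintype.card ι) := by
  classical
  constructor
  · refine ⟨∑ k, a k, ?_⟩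
    rw [hL.subtreeCount_card hι, Finset.card_ne_zero]
    exact ⟨a, Finset.mem_filter.2 ⟨Finset.mem_Icc.2 ⟨hL.length_pos, le_rfl⟩, rfl⟩⟩
  · rintro j ⟨i, hij⟩
    rw [subtreeCount_eq_ncard] at hij
    obtain ⟨S, hS, -, rfl⟩ := Set.nonempty_of_ncard_ne_zero hij
    exact hL.ncard_leafEdges_le hι hS

end LegSet

end IsLegs

end Legs

section GeneratingFunction

open Polynomial

variable {ι κ R α : Type*}

lemma exists_equiv_comp_eq_of_map_univ_eq [Fintype ι] [Fintype κ] {f : ι → α} {g : κ → α}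
    (h : univ.val.map f = univ.val.map g) : ∃ σ : ι ≃ κ, g ∘ σ = f := by
  classical
  have hfiber (x : α) : Nonempty ({k // f k = x} ≃ {k // g k = x}) := by
    have hcount := congrArg (Multiset.count x) h
    rw [Multiset.count_map, Multiset.count_map] at hcount
    refine ⟨Fintype.equivOfCardEq ?_⟩
    simpa only [Fintype.card_subtype, Finset.card_def, Finset.filter_val, eq_comm (a := x)]
      using hcount
  let e (x : α) := (hfiber x).some
  exact ⟨Equiv.ofFiberEquiv e, funext (Equiv.ofFiberEquiv_map e)⟩

lemma coeff_prod_sum_X_pow [CommSemiring R] [Fintype ι] [DecidableEq ι] (s : ι → Finset ℕ) (n : ℕ) :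
    (∏ k, ∑ i ∈ s k, (X ^ i : R[X])).coeff n = #{b ∈ Fintype.piFinset s | ∑ k, b k = n} := by
  simp only [prod_univ_sum, prod_pow_eq_pow_sum, finsetSum_coeff, coeff_X_pow, sum_boole,
    eq_comm (a := n)]

lemma prod_sum_X_pow_mul [CommRing R] [Fintype ι] (a : ι → ℕ) :
    (∏ k, ∑ i ∈ Finset.Icc 1 (a k), (X ^ i : R[X])) * (X - 1) ^ Fintype.card ι =
      X ^ Fintype.card ι * ∏ k, (X ^ a k - 1) := by
  have hgeom (m : ℕ) : (∑ i ∈ Finset.Icc 1 m, (X ^ i : R[X])) * (X - 1) = X * (X ^ m - 1) := by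
    rw [← Finset.Ico_add_one_right_eq_Icc, geom_sum_Ico_mul _ (by lia)]
    ring
  simp only [← Finset.card_univ, ← Finset.prod_const, ← Finset.prod_mul_distrib, hgeom]

lemma exists_dvd_of_X_pow_sub_one_dvd_prod [CommRing R] [IsDomain R] {m : ℕ} [NeZero (m : R)]
    {s : Multiset ℕ} (h : (X ^ m - 1 : R[X]) ∣ (s.map fun a => X ^ a - 1).prod) :
    ∃ a ∈ s, m ∣ a := by
  let K := AlgebraicClosure (FractionRing R)
  have := FaithfulSMul.trans R (FractionRing R) K
  have : NeZero (m : K) := NeZero.nat_of_injective (FaithfulSMul.algebraMap_injective R K)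
  obtain ⟨z, hz⟩ := HasEnoughRootsOfUnity.exists_primitiveRoot K m
  have hroot : (s.map fun a => z ^ a - 1).prod = 0 := by
    have hdvd := map_dvd (aeval z) h
    simpa [map_multiset_prod, hz.pow_eq_one] using hdvd
  obtain ⟨a, ha, hza⟩ := Multiset.mem_map.1 (Multiset.prod_eq_zero_iff.1 hroot)
  exact ⟨a, ha, hz.dvd_of_pow_eq_one a (sub_eq_zero.1 hza)⟩

lemma exists_dvd_of_prod_X_pow_sub_one_eq [CommRing R] [IsDomain R] [CharZero R]
    {s t : Multiset ℕ} (hs : 0 ∉ s)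
    (h : (s.map fun a => (X ^ a - 1 : R[X])).prod = (t.map fun a => X ^ a - 1).prod) {m : ℕ}
    (hm : m ∈ s) : ∃ a ∈ t, m ∣ a := by
  have : NeZero (m : R) := ⟨Nat.cast_ne_zero.2 (ne_of_mem_of_not_mem hm hs)⟩
  exact exists_dvd_of_X_pow_sub_one_dvd_prod (R := R)
    (h ▸ Multiset.dvd_prod (Multiset.mem_map_of_mem _ hm))

lemma eq_of_prod_X_pow_sub_one_eq [CommRing R] [IsDomain R] [CharZero R] {s t : Multiset ℕ}
    (hs : 0 ∉ s) (ht : 0 ∉ t)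
    (h : (s.map fun a => (X ^ a - 1 : R[X])).prod = (t.map fun a => X ^ a - 1).prod) : s = t := by
  induction hn : s.card generalizing s t with
  | zero =>
    obtain rfl := Multiset.card_eq_zero.1 hn
    refine (Multiset.eq_zero_of_forall_notMem fun m hm => ?_).symm
    simpa using exists_dvd_of_prod_X_pow_sub_one_eq ht h.symm hm
  | succ n ih =>
    obtain ⟨m, hm, hmax⟩ := s.toFinset.exists_max_image id (by
      rw [Multiset.toFinset_nonempty, ← Multiset.card_pos]; lia)
    simp only [Multiset.mem_toFinset, id] at hm hmax
    have hmt : m ∈ t := by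
      obtain ⟨b, hb, hmb⟩ := exists_dvd_of_prod_X_pow_sub_one_eq hs h hm
      obtain ⟨a, ha, hba⟩ := exists_dvd_of_prod_X_pow_sub_one_eq ht h.symm hb
      have hpos {x} (hx : x ∈ s) : 0 < x := Nat.pos_of_ne_zero (ne_of_mem_of_not_mem hx hs)
      have ham : a = m :=
        le_antisymm (hmax a ha) (Nat.le_of_dvd (hpos ha) (hmb.trans hba))
      rwa [Nat.dvd_antisymm hmb (ham ▸ hba)]
    obtain ⟨s, rfl⟩ := Multiset.exists_cons_of_mem hm
    obtain ⟨t, rfl⟩ := Multiset.exists_cons_of_mem hmt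
    rw [Multiset.mem_cons, not_or] at hs ht
    rw [Multiset.map_cons, Multiset.map_cons, Multiset.prod_cons, Multiset.prod_cons] at h
    have hne : (X ^ m - 1 : R[X]) ≠ 0 := X_pow_sub_C_ne_zero (Nat.pos_of_ne_zero (Ne.symm hs.1)) 1
    rw [ih hs.2 ht.2 (mul_left_cancel₀ hne h) (by simpa using hn)]

lemma exists_equiv_of_card_filter_sum_eq [Fintype ι] [Fintype κ] [DecidableEq ι] [DecidableEq κ]
    {a : ι → ℕ} {b : κ → ℕ} (ha : ∀ k, 0 < a k) (hb : ∀ k, 0 < b k)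
    (hcard : Fintype.card ι = Fintype.card κ)
    (h : ∀ n, #{x ∈ Finset.Icc 1 a | ∑ k, x k = n} = #{x ∈ Finset.Icc 1 b | ∑ k, x k = n}) :
    ∃ σ : ι ≃ κ, b ∘ σ = a := by
  have hgen : ∏ k, ∑ i ∈ Finset.Icc 1 (a k), (X ^ i : ℤ[X]) =
      ∏ k, ∑ i ∈ Finset.Icc 1 (b k), X ^ i := by
    ext n
    rw [coeff_prod_sum_X_pow, coeff_prod_sum_X_pow]
    exact_mod_cast h n
  have hprod : ∏ k, (X ^ a k - 1 : ℤ[X]) = ∏ k, (X ^ b k - 1) := by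
    refine mul_left_cancel₀ (pow_ne_zero (Fintype.card ι) X_ne_zero) ?_
    rw [← prod_sum_X_pow_mul, hgen, hcard, prod_sum_X_pow_mul]
  refine exists_equiv_comp_eq_of_map_univ_eq (eq_of_prod_X_pow_sub_one_eq (R := ℤ) ?_ ?_ ?_)
  · simpa using fun k => (ha k).ne'
  · simpa using fun k => (hb k).ne'
  · rw [Multiset.map_map, Multiset.map_map]
    exact hprod

end GeneratingFunction

/-- Two spiders with the same subtree polynomial are isomorphic. -/
theorem stmt_13 [Fintype V] [Fintype W] (T : SimpleGraph V) (U : SimpleGraph W)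
    [DecidableRel T.Adj] [DecidableRel U.Adj]
    (hT : IsSpider T) (hU : IsSpider U)
    (h : ∀ i j : ℕ, subtreeCount T i j = subtreeCount U i j) :
    Nonempty (T ≃g U) := by
  classical
  obtain ⟨c, a, v, hc, hLT⟩ := hT.exists_isLegs
  obtain ⟨c', b, w, hc', hLU⟩ := hU.exists_isLegs
  have hcard : Fintype.card (T.neighborSet c) = Fintype.card (U.neighborSet c') := by
    refine (hLT.isGreatest_card hc).unique ?_
    simpa only [h] using hLU.isGreatest_card hc'
  obtain ⟨σ, rfl⟩ := exists_equiv_of_card_filter_sum_eq hLT.length_pos hLU.length_pos hcard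
    fun n => by rw [← hLT.subtreeCount_card hc, h, hcard, hLU.subtreeCount_card hc']
  exact hLT.nonempty_iso (hLU.reindex σ)
end

section
/- Let T and U be spiders, each with n vertices, and suppose that for every partition of n into exactly two parts (n−a, a), N_{(n−a,a)}(T) = N_{(n−a,a)}(U); equivalently, for every a with 1 ≤ a ≤ ⌊n/2⌋, the number of edges e of T such that the smaller of the two components of T − e has exactly a vertices equals the corresponding number for U. Then T and U are isomorphic as graphs. (That is, the two-part portion of the chromatic symmetric function determines a spider up to isomorphism.) -/
open SimpleGraph Finset

variable {V : Type*} {W : Type*}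

/-!
A spider is a centre with legs attached, so only the leg lengths have to be recovered. Let `F b` be
the number of legs with at least `b` vertices. Deleting an edge of a leg cuts off the end of that
leg, so `N_{(n-a,a)}` is `F a + F (n - a)`, or just `F a` when `2 * a = n`. At most one leg is
longer than `n / 2`. If its length is `L`, every other leg has at most `n - L - 2` vertices, because
a third leg and the centre take up two more; hence `F (n - L - 1) = F (n - L)`, while
`F (L + 1) = 0` and `F L = 1`, so the long leg shows up as an ascent
`N_{(L+1,n-L-1)} < N_{(L,n-L)}`. As `F` is antitone, ascents occur in no other way, so the numbers
`N_{(n-a,a)}` determine `F b` for `2 * b > n`, and then by subtraction for all `b ≥ 1`.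
-/

theorem pair_sub_eq_pair_sub_iff {n a b : ℕ} (ha : a ≤ n) (hb : b ≤ n) :
    ({n - a, a} : Multiset ℕ) = {n - b, b} ↔ a = b ∨ a = n - b := by
  constructor
  · intro h
    have : a ∈ ({n - b, b} : Multiset ℕ) := h ▸ by simp
    simpa [or_comm] using this
  · rintro (rfl | rfl)
    · rfl
    · rw [Nat.sub_sub_self hb, Multiset.pair_comm]

/-! ### Parent maps -/

/-- The edge from `v` to its parent; at the root it is a loop, hence not an edge of the graph. -/
def parentEdge (f : V → V) (v : V) : Sym2 V := s(v, f v)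

/-- The simple graph in which every vertex is joined to its parent under `f`. -/
def parentGraph (f : V → V) : SimpleGraph V := SimpleGraph.fromRel fun v w => f v = w

/-- `f` is the parent map of a tree rooted at `c`, in which `d v` is the distance of `v` from `c`.
The root is encoded as its own parent. -/
structure IsParentMap (c : V) (f : V → V) (d : V → ℕ) : Prop where
  map_root : f c = c
  depth_root : d c = 0
  depth_eq_succ : ∀ v, v ≠ c → d v = d (f v) + 1

open Classical in
/-- The vertices of the subtree hanging from `v`, including `v` itself. -/
noncomputable def descendants [Fintype V] (f : V → V) (v : V) : Finset V :=
  {w | ∃ k : ℕ, f^[k] w = v}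

open Classical in
/-- The vertices that are nearest to the root in their component of `(V, A)`: those whose edge to
the parent is missing from `A`. The root is one of them because its parent edge is a loop. -/
noncomputable def componentTops [Fintype V] (f : V → V) (A : Finset (Sym2 V)) : Finset V :=
  {v | parentEdge f v ∉ A}

theorem parentGraph_adj {f : V → V} {v w : V} :
    (parentGraph f).Adj v w ↔ v ≠ w ∧ (f v = w ∨ f w = v) := by
  simp [parentGraph]

/-- An equivalence intertwining two parent maps is an isomorphism of their graphs. -/
def parentGraphIso {f : V → V} {g : W → W} (e : V ≃ W) (h : Function.Semiconj e f g) :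
    parentGraph f ≃g parentGraph g where
  toEquiv := e
  map_rel_iff' {v w} := by
    rw [parentGraph_adj, parentGraph_adj, ← h, ← h]
    simp only [ne_eq, e.injective.eq_iff]

section Descendants

variable [Fintype V] {f : V → V}

theorem mem_descendants {v w : V} : w ∈ descendants f v ↔ ∃ k : ℕ, f^[k] w = v := by
  simp [descendants]

theorem self_mem_descendants (f : V → V) (v : V) : v ∈ descendants f v :=
  mem_descendants.2 ⟨0, rfl⟩

theorem mem_descendants_of_map_mem {v w : V} (h : f w ∈ descendants f v) : w ∈ descendants f v := by
  obtain ⟨k, hk⟩ := mem_descendants.1 h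
  exact mem_descendants.2 ⟨k + 1, hk⟩

theorem map_mem_descendants {v w : V} (h : w ∈ descendants f v) (hne : w ≠ v) :
    f w ∈ descendants f v := by
  obtain ⟨_ | k, hk⟩ := mem_descendants.1 h
  · exact absurd hk hne
  · exact mem_descendants.2 ⟨k, hk⟩

theorem mem_componentTops {A : Finset (Sym2 V)} {v : V} :
    v ∈ componentTops f A ↔ parentEdge f v ∉ A := by
  simp [componentTops]

/-- An edge of `A` leaving the subtree of `v` could only be the missing edge above `v`. -/
theorem mem_descendants_of_reachable {A : Finset (Sym2 V)}
    (hA : (A : Set (Sym2 V)) ⊆ (parentGraph f).edgeSet) {v x y : V} (hv : v ∈ componentTops f A)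
    (hxy : (fromEdgeSet (A : Set (Sym2 V))).Reachable x y) (hx : x ∈ descendants f v) :
    y ∈ descendants f v := by
  obtain ⟨walk⟩ := hxy
  induction walk with
  | nil => exact hx
  | @cons x z _ hxz _ ih =>
    refine ih ?_
    have hxzA : s(x, z) ∈ A := ((fromEdgeSet_adj _).1 hxz).1
    obtain ⟨-, rfl | rfl⟩ : x ≠ z ∧ (f x = z ∨ f z = x) := parentGraph_adj.1 (hA hxzA)
    · refine map_mem_descendants hx ?_
      rintro rfl
      exact mem_componentTops.1 hv hxzA
    · exact mem_descendants_of_map_mem hx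

end Descendants

namespace IsParentMap

variable {c : V} {f : V → V} {d : V → ℕ}

theorem depth_eq_zero_iff (hf : IsParentMap c f d) {v : V} : d v = 0 ↔ v = c := by
  refine ⟨fun hv => by_contra fun hne => ?_, fun hv => hv ▸ hf.depth_root⟩
  have := hf.depth_eq_succ v hne
  lia

theorem depth_pos (hf : IsParentMap c f d) {v : V} (hv : v ≠ c) : 0 < d v :=
  Nat.pos_of_ne_zero (mt hf.depth_eq_zero_iff.1 hv)

theorem depth_map (hf : IsParentMap c f d) (v : V) : d (f v) = d v - 1 := by
  by_cases hv : v = c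
  · rw [hv, hf.map_root, hf.depth_root]
  · have := hf.depth_eq_succ v hv
    lia

theorem depth_iterate (hf : IsParentMap c f d) (k : ℕ) (v : V) : d (f^[k] v) = d v - k := by
  induction k with
  | zero => rfl
  | succ k ih => rw [Function.iterate_succ_apply', hf.depth_map, ih, Nat.sub_sub]

theorem map_ne_self (hf : IsParentMap c f d) {v : V} (hv : v ≠ c) : f v ≠ v := by
  intro h
  have := hf.depth_eq_succ v hv
  rw [h] at this
  lia

theorem induction_on (hf : IsParentMap c f d) {P : V → Prop} (root : P c)
    (step : ∀ v, v ≠ c → P (f v) → P v) (v : V) : P v := by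
  induction hk : d v generalizing v with
  | zero => exact hf.depth_eq_zero_iff.1 hk ▸ root
  | succ k ih =>
    have hv : v ≠ c := fun h => by rw [h, hf.depth_root] at hk; lia
    exact step v hv (ih (f v) (by rw [hf.depth_map, hk, Nat.add_sub_cancel]))

theorem parentEdge_injective (hf : IsParentMap c f d) : Function.Injective (parentEdge f) := by
  intro v w h
  obtain ⟨hvw, -⟩ | ⟨hv, hw⟩ := Sym2.eq_iff.1 h
  · exact hvw
  · have hdv := hf.depth_map w
    have hdw := hf.depth_map v
    rw [← hv] at hdv
    rw [hw] at hdw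
    exact (hf.depth_eq_zero_iff.1 (by lia)).trans (hf.depth_eq_zero_iff.1 (by lia)).symm

theorem mem_edgeSet_parentGraph (hf : IsParentMap c f d) {e : Sym2 V} :
    e ∈ (parentGraph f).edgeSet ↔ ∃ v ≠ c, parentEdge f v = e := by
  constructor
  · induction e with
    | _ v w =>
      intro h
      obtain ⟨hne, hv | hw⟩ := parentGraph_adj.1 h
      · refine ⟨v, ?_, by rw [parentEdge, hv]⟩
        rintro rfl
        exact hne (hf.map_root.symm.trans hv)
      · refine ⟨w, ?_, by rw [parentEdge, hw, Sym2.eq_swap]⟩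
        rintro rfl
        exact hne (hw.symm.trans hf.map_root)
  · rintro ⟨v, hv, rfl⟩
    exact parentGraph_adj.2 ⟨(hf.map_ne_self hv).symm, Or.inl rfl⟩

theorem connected (hf : IsParentMap c f d) : (parentGraph f).Connected := by
  have reachable_root (v : V) : (parentGraph f).Reachable v c := by
    induction v using hf.induction_on with
    | root => exact Reachable.refl c
    | step v hv ih =>
      exact (Adj.reachable (hf.mem_edgeSet_parentGraph.2 ⟨v, hv, rfl⟩)).trans ih
  exact connected_iff_exists_forall_reachable _ |>.2 ⟨c, fun v => (reachable_root v).symm⟩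

section Components

variable [Fintype V] {A : Finset (Sym2 V)}

theorem descendants_antisymm (hf : IsParentMap c f d) {v w : V} (hv : v ∈ descendants f w)
    (hw : w ∈ descendants f v) : v = w := by
  obtain ⟨k, rfl⟩ := mem_descendants.1 hv
  obtain ⟨l, hl⟩ := mem_descendants.1 hw
  have hk := hf.depth_iterate k v
  have hdepth := hf.depth_iterate l (f^[k] v)
  rw [hl] at hdepth
  obtain rfl | hk0 := Nat.eq_zero_or_pos k
  · rfl
  · rw [hf.depth_eq_zero_iff.1 (by lia : d v = 0), Function.iterate_fixed hf.map_root]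

theorem mem_descendants_root (hf : IsParentMap c f d) (v : V) : v ∈ descendants f c := by
  induction v using hf.induction_on with
  | root => exact self_mem_descendants f c
  | step v _ ih => exact mem_descendants_of_map_mem ih

theorem root_mem_componentTops (hf : IsParentMap c f d)
    (hA : (A : Set (Sym2 V)) ⊆ (parentGraph f).edgeSet) : c ∈ componentTops f A := by
  refine mem_componentTops.2 fun h => ?_
  obtain ⟨v, hv, hvc⟩ := hf.mem_edgeSet_parentGraph.1 (hA h)
  exact hv (hf.parentEdge_injective hvc)

theorem exists_componentTop_reachable (hf : IsParentMap c f d)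
    (hA : (A : Set (Sym2 V)) ⊆ (parentGraph f).edgeSet) (x : V) :
    ∃ v ∈ componentTops f A, (fromEdgeSet (A : Set (Sym2 V))).Reachable x v := by
  induction x using hf.induction_on with
  | root => exact ⟨c, hf.root_mem_componentTops hA, Reachable.refl c⟩
  | step x hx ih =>
    by_cases hxA : parentEdge f x ∈ A
    · obtain ⟨v, hv, hreach⟩ := ih
      have hadj : (fromEdgeSet (A : Set (Sym2 V))).Adj x (f x) :=
        (fromEdgeSet_adj _).2 ⟨hxA, (hf.map_ne_self hx).symm⟩
      exact ⟨v, hv, hadj.reachable.trans hreach⟩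
    · exact ⟨x, mem_componentTops.2 hxA, Reachable.refl x⟩

theorem edgeSetType_eq_map_componentTops (hf : IsParentMap c f d)
    (hA : (A : Set (Sym2 V)) ⊆ (parentGraph f).edgeSet) :
    edgeSetType A = (componentTops f A).val.map fun v =>
      ((fromEdgeSet (A : Set (Sym2 V))).connectedComponentMk v).supp.ncard := by
  classical
  set B := fromEdgeSet (A : Set (Sym2 V))
  have hinj : Set.InjOn B.connectedComponentMk (componentTops f A) := by
    intro v hv w hw h
    have hvw : B.Reachable v w := ConnectedComponent.exact h
    exact hf.descendants_antisymm
      (mem_descendants_of_reachable hA hw hvw.symm (self_mem_descendants f w))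
      (mem_descendants_of_reachable hA hv hvw (self_mem_descendants f v))
  have himage : (univ : Finset V).image B.connectedComponentMk =
      (componentTops f A).image B.connectedComponentMk := by
    refine Subset.antisymm (fun C hC => ?_) (image_subset_image (subset_univ _))
    obtain ⟨x, -, rfl⟩ := mem_image.1 hC
    obtain ⟨v, hv, hxv⟩ := hf.exists_componentTop_reachable hA x
    exact mem_image.2 ⟨v, hv, ConnectedComponent.sound hxv.symm⟩
  have hval := image_val_of_injOn hinj
  rw [← himage] at hval
  unfold edgeSetType
  convert congrArg (Multiset.map fun C : B.ConnectedComponent => C.supp.ncard) hval using 1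
  rw [Multiset.map_map]
  rfl

open Classical in
theorem edgeSetType_of_componentTops_eq_pair (hf : IsParentMap c f d)
    (hA : (A : Set (Sym2 V)) ⊆ (parentGraph f).edgeSet) {v : V} (hv : v ≠ c)
    (htops : componentTops f A = {c, v}) :
    edgeSetType A = {Fintype.card V - #(descendants f v), #(descendants f v)} := by
  set B := fromEdgeSet (A : Set (Sym2 V))
  have hvtop : v ∈ componentTops f A := htops ▸ mem_insert_of_mem (mem_singleton_self v)
  have mem_of_reachable {x : V} (hx : B.Reachable x v) : x ∈ descendants f v :=
    mem_descendants_of_reachable hA hvtop hx.symm (self_mem_descendants f v)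
  have notMem_of_reachable {x : V} (hx : B.Reachable x c) : x ∉ descendants f v := fun hxv =>
    hv (hf.descendants_antisymm (hf.mem_descendants_root v)
      (mem_descendants_of_reachable hA hvtop hx hxv))
  have reachable_or (x : V) : B.Reachable x c ∨ B.Reachable x v := by
    obtain ⟨w, hw, hxw⟩ := hf.exists_componentTop_reachable hA x
    obtain rfl | rfl : w = c ∨ w = v := by simpa [htops] using hw
    exacts [Or.inl hxw, Or.inr hxw]
  have supp_top : (B.connectedComponentMk v).supp = descendants f v := by
    ext x
    rw [ConnectedComponent.mem_supp_iff, ConnectedComponent.eq, mem_coe]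
    exact ⟨mem_of_reachable, fun hx => (reachable_or x).resolve_left (notMem_of_reachable · hx)⟩
  have supp_root : (B.connectedComponentMk c).supp = ((descendants f v)ᶜ : Finset V) := by
    ext x
    rw [ConnectedComponent.mem_supp_iff, ConnectedComponent.eq, mem_coe, mem_compl]
    exact ⟨notMem_of_reachable, fun hx => (reachable_or x).resolve_right (hx <| mem_of_reachable ·)⟩
  rw [hf.edgeSetType_eq_map_componentTops hA, htops,
    insert_val_of_notMem (by simpa using hv.symm), Multiset.map_cons, singleton_val,
    Multiset.map_singleton, supp_top, supp_root, Set.ncard_coe_finset, Set.ncard_coe_finset,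
    card_compl]
  rfl

open Classical in
theorem componentTops_eq_pair_iff (hf : IsParentMap c f d)
    (hA : (A : Set (Sym2 V)) ⊆ (parentGraph f).edgeSet) {v : V} (hv : v ≠ c) :
    componentTops f A = {c, v} ↔
      A = (parentGraph f).edgeFinset.erase (parentEdge f v) := by
  constructor
  · intro htops
    ext e
    rw [mem_erase, mem_edgeFinset]
    refine ⟨fun he => ⟨?_, hA he⟩, fun ⟨hev, he⟩ => ?_⟩
    · rintro rfl
      have hvtop : v ∈ componentTops f A := htops ▸ mem_insert_of_mem (mem_singleton_self v)
      exact mem_componentTops.1 hvtop he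
    · obtain ⟨w, hw, rfl⟩ := hf.mem_edgeSet_parentGraph.1 he
      by_contra hwA
      have hwtop := mem_componentTops.2 hwA
      rw [htops, mem_insert, mem_singleton] at hwtop
      obtain hwc | rfl := hwtop
      exacts [hw hwc, hev rfl]
  · rintro rfl
    ext w
    rw [mem_componentTops, mem_erase, mem_edgeFinset, hf.parentEdge_injective.ne_iff,
      hf.mem_edgeSet_parentGraph]
    simp only [hf.parentEdge_injective.eq_iff, exists_eq_right, mem_insert, mem_singleton]
    tauto

open Classical in
theorem exists_eq_erase_of_card_edgeSetType_eq_two (hf : IsParentMap c f d)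
    (hA : (A : Set (Sym2 V)) ⊆ (parentGraph f).edgeSet) (hcard : (edgeSetType A).card = 2) :
    ∃ v ≠ c, A = (parentGraph f).edgeFinset.erase (parentEdge f v) := by
  rw [hf.edgeSetType_eq_map_componentTops hA, Multiset.card_map, card_val] at hcard
  have hc := hf.root_mem_componentTops hA
  obtain ⟨v, hv⟩ : ∃ v, (componentTops f A).erase c = {v} := by
    rw [← card_eq_one, card_erase_of_mem hc, hcard]
  have hvc : v ≠ c := ne_of_mem_erase (hv ▸ mem_singleton_self v)
  refine ⟨v, hvc, (hf.componentTops_eq_pair_iff hA hvc).1 ?_⟩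
  rw [← insert_erase hc, hv]

open Classical in
theorem edgeSetType_erase_parentEdge (hf : IsParentMap c f d) {v : V} (hv : v ≠ c) :
    edgeSetType ((parentGraph f).edgeFinset.erase (parentEdge f v)) =
      {Fintype.card V - #(descendants f v), #(descendants f v)} := by
  have hA : ((parentGraph f).edgeFinset.erase (parentEdge f v) : Set (Sym2 V)) ⊆
      (parentGraph f).edgeSet := fun e he => mem_edgeFinset.1 (mem_of_mem_erase (mem_coe.1 he))
  exact hf.edgeSetType_of_componentTops_eq_pair hA hv ((hf.componentTops_eq_pair_iff hA hv).2 rfl)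

open Classical in
theorem NCoeff_parentGraph (hf : IsParentMap c f d) {a : ℕ} (ha : a ≤ Fintype.card V) :
    NCoeff (parentGraph f) {Fintype.card V - a, a} =
      #{v | v ≠ c ∧ (#(descendants f v) = a ∨ #(descendants f v) = Fintype.card V - a)} := by
  have htype {v : V} (hv : v ≠ c) :
      edgeSetType ((parentGraph f).edgeFinset.erase (parentEdge f v)) = {Fintype.card V - a, a} ↔
        #(descendants f v) = a ∨ #(descendants f v) = Fintype.card V - a := by
    rw [hf.edgeSetType_erase_parentEdge hv]
    exact pair_sub_eq_pair_sub_iff (card_le_univ _) ha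
  have herase :
      Set.InjOn (fun v => (parentGraph f).edgeFinset.erase (parentEdge f v)) {v | v ≠ c} :=
    fun v hv w hw h => hf.parentEdge_injective <|
      erase_injOn _ (mem_edgeFinset.2 (hf.mem_edgeSet_parentGraph.2 ⟨v, hv, rfl⟩))
        (mem_edgeFinset.2 (hf.mem_edgeSet_parentGraph.2 ⟨w, hw, rfl⟩)) h
  unfold NCoeff
  rw [← card_image_of_injOn (herase.mono fun v hv => (mem_filter.1 hv).2.1)]
  congr 1
  ext A
  simp only [mem_filter, powerset_univ, mem_univ, true_and, mem_image]
  constructor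
  · rintro ⟨hA, hAtype⟩
    obtain ⟨v, hv, rfl⟩ := hf.exists_eq_erase_of_card_edgeSetType_eq_two hA (by rw [hAtype]; rfl)
    exact ⟨v, ⟨hv, (htype hv).1 hAtype⟩, rfl⟩
  · rintro ⟨v, ⟨hv, hcard⟩, rfl⟩
    exact ⟨fun e he => mem_edgeFinset.1 (mem_of_mem_erase he), (htype hv).2 hcard⟩

end Components

end IsParentMap

/-! ### Invariance of `NCoeff` -/

theorem edgeSetType_eq_of_iso [Fintype V] [Fintype W] {A : Finset (Sym2 V)} {B : Finset (Sym2 W)}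
    (e : fromEdgeSet (A : Set (Sym2 V)) ≃g fromEdgeSet (B : Set (Sym2 W))) :
    edgeSetType A = edgeSetType B := by
  classical
  have himage : (univ : Finset W).image (fromEdgeSet (B : Set (Sym2 W))).connectedComponentMk =
      ((univ : Finset V).image (fromEdgeSet (A : Set (Sym2 V))).connectedComponentMk).map
        e.connectedComponentEquiv.toEmbedding := by
    rw [← map_univ_equiv e.toEquiv, map_eq_image, map_eq_image, image_image, image_image]
    rfl
  have hsupp (C : (fromEdgeSet (A : Set (Sym2 V))).ConnectedComponent) :
      (e.connectedComponentEquiv C).supp.ncard = C.supp.ncard :=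
    (Nat.card_congr (ConnectedComponent.isoEquivSupp e C)).symm
  unfold edgeSetType
  convert congrArg (fun s => Multiset.map (fun C => C.supp.ncard) s.val) himage.symm using 1
  rw [map_val, Multiset.map_map]
  exact (Multiset.map_congr (by congr!) fun C _ => hsupp C).symm

/-- The isomorphism of spanning subgraphs obtained by relabelling the vertices of an edge set. -/
def fromEdgeSetMapIso (e : V ≃ W) (A : Finset (Sym2 V)) :
    fromEdgeSet (A : Set (Sym2 V)) ≃g
      fromEdgeSet ((A.map e.toEmbedding.sym2Map : Finset (Sym2 W)) : Set (Sym2 W)) where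
  toEquiv := e
  map_rel_iff' {v w} := by
    rw [fromEdgeSet_adj, fromEdgeSet_adj, mem_coe, mem_coe, e.injective.ne_iff]
    exact and_congr_left' (mem_map' (a := s(v, w)) e.toEmbedding.sym2Map)

theorem NCoeff_le_of_iso [Fintype V] [Fintype W] {G : SimpleGraph V} {H : SimpleGraph W}
    (e : G ≃g H) (lam : Multiset ℕ) : NCoeff G lam ≤ NCoeff H lam := by
  classical
  unfold NCoeff
  refine card_le_card_of_injOn (Finset.map e.toEquiv.toEmbedding.sym2Map) (fun A hA => ?_)
    (Finset.map_injective _).injOn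
  obtain ⟨-, hAG, htype⟩ := mem_filter.1 (mem_coe.1 hA)
  refine mem_coe.2 (mem_filter.2 ⟨by simp, fun x hx => ?_, ?_⟩)
  · obtain ⟨y, hy, rfl⟩ := mem_map.1 (mem_coe.1 hx)
    exact e.map_mem_edgeSet_iff.2 (hAG hy)
  · rw [← edgeSetType_eq_of_iso (fromEdgeSetMapIso e.toEquiv A), htype]

theorem NCoeff_eq_of_iso [Fintype V] [Fintype W] {G : SimpleGraph V} {H : SimpleGraph W}
    (e : G ≃g H) (lam : Multiset ℕ) : NCoeff G lam = NCoeff H lam :=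
  (NCoeff_le_of_iso e lam).antisymm (NCoeff_le_of_iso e.symm lam)

/-! ### Leg lengths -/

section Legs

variable {ι κ : Type*} [Fintype ι] [Fintype κ]

/-- The number of legs with at least `b` vertices, in a spider whose leg lengths are `ℓ`. -/
def numLegsGE (ℓ : ι → ℕ) (b : ℕ) : ℕ := #{i | b ≤ ℓ i}

/-- The number of edges of the spider with leg lengths `ℓ` whose deletion leaves a component with
`a` vertices, an edge leaving two such components being counted twice. The spider has
`∑ i, ℓ i + 1` vertices, and the edges cutting off `b` of them from the end of a leg correspond to
the legs with at least `b` vertices. -/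
def pairCount (ℓ : ι → ℕ) (a : ℕ) : ℕ := numLegsGE ℓ a + numLegsGE ℓ (∑ i, ℓ i + 1 - a)

theorem numLegsGE_antitone (ℓ : ι → ℕ) : Antitone (numLegsGE ℓ) :=
  fun _ _ h => card_le_card (monotone_filter_right _ fun _ _ hi => h.trans hi)

theorem numLegsGE_pos_iff {ℓ : ι → ℕ} {b : ℕ} : 0 < numLegsGE ℓ b ↔ ∃ i, b ≤ ℓ i := by
  simp [numLegsGE, card_pos, Finset.Nonempty]

theorem one_lt_numLegsGE_iff {ℓ : ι → ℕ} {b : ℕ} :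
    1 < numLegsGE ℓ b ↔ ∃ i j, b ≤ ℓ i ∧ b ≤ ℓ j ∧ i ≠ j := by
  simp [numLegsGE, one_lt_card_iff]

theorem leg_add_leg_add_one_le_sum {ℓ : ι → ℕ} (hℓ : ∀ i, 0 < ℓ i) (hι : 3 ≤ Fintype.card ι)
    {i j : ι} (hij : i ≠ j) : ℓ i + ℓ j + 1 ≤ ∑ k, ℓ k := by
  classical
  obtain ⟨k, hk⟩ : ∃ k, k ∉ ({i, j} : Finset ι) := by
    by_contra! h
    have := card_le_card (fun k _ => h k : univ ⊆ ({i, j} : Finset ι))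
    rw [card_univ, card_pair hij] at this
    lia
  have hle := sum_le_sum_of_subset (f := ℓ) (subset_univ (insert k {i, j}))
  rw [sum_insert hk, sum_pair hij] at hle
  have := hℓ k
  lia

theorem numLegsGE_le_one {ℓ : ι → ℕ} (hℓ : ∀ i, 0 < ℓ i) (hι : 3 ≤ Fintype.card ι) {b : ℕ}
    (hb : ∑ i, ℓ i ≤ 2 * b) : numLegsGE ℓ b ≤ 1 := by
  by_contra! h
  obtain ⟨i, j, hi, hj, hij⟩ := one_lt_numLegsGE_iff.1 h
  have :=
    leg_add_leg_add_one_le_sum hℓ hι hij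
  lia

/-- The other legs have at most `∑ i, ℓ i - ℓ j - 1` vertices, so passing from `∑ i, ℓ i - ℓ j` to
its successor loses no leg in the first summand of `pairCount` and gains leg `j` in the second. -/
theorem pairCount_lt_pairCount_succ_of_long_leg {ℓ : ι → ℕ} (hℓ : ∀ i, 0 < ℓ i)
    (hι : 3 ≤ Fintype.card ι) {j : ι} (hj : ∑ i, ℓ i < 2 * ℓ j) :
    pairCount ℓ (∑ i, ℓ i - ℓ j) < pairCount ℓ (∑ i, ℓ i - ℓ j + 1) := by
  set s := ∑ i, ℓ i
  have hjs : ℓ j ≤ s := single_le_sum_of_canonicallyOrdered (mem_univ j)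
  have other_legs {k : ι} (hk : k ≠ j) : ℓ k + ℓ j + 1 ≤ s :=
    leg_add_leg_add_one_le_sum hℓ hι hk
  have first_summand : numLegsGE ℓ (s - ℓ j) ≤ numLegsGE ℓ (s - ℓ j + 1) := by
    refine card_le_card (monotone_filter_right _ fun k _ hk => ?_)
    obtain rfl | hkj := eq_or_ne k j
    · lia
    · have := other_legs hkj
      lia
  have no_longer_leg : ¬ 0 < numLegsGE ℓ (ℓ j + 1) := by
    rw [numLegsGE_pos_iff]
    rintro ⟨k, hk⟩
    have := other_legs (k := k) (by rintro rfl; lia)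
    lia
  have hj_counted : 0 < numLegsGE ℓ (ℓ j) := numLegsGE_pos_iff.2 ⟨j, le_rfl⟩
  rw [pairCount, pairCount, show s + 1 - (s - ℓ j) = ℓ j + 1 by lia,
    show s + 1 - (s - ℓ j + 1) = ℓ j by lia]
  lia

theorem numLegsGE_pos_iff_exists_pairCount_lt {ℓ : ι → ℕ} (hℓ : ∀ i, 0 < ℓ i)
    (hι : 3 ≤ Fintype.card ι) {b : ℕ} (hb : ∑ i, ℓ i + 1 < 2 * b) :
    0 < numLegsGE ℓ b ↔
      ∃ a, 1 ≤ a ∧ a + b ≤ ∑ i, ℓ i ∧ pairCount ℓ a < pairCount ℓ (a + 1) := by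
  constructor
  · intro h
    obtain ⟨j, hj⟩ := numLegsGE_pos_iff.1 h
    obtain ⟨k, hk⟩ : ∃ k, k ≠ j := Fintype.exists_ne_of_one_lt_card (by lia) j
    have :=
    leg_add_leg_add_one_le_sum hℓ hι hk
    exact ⟨∑ i, ℓ i - ℓ j, by lia, by lia,
      pairCount_lt_pairCount_succ_of_long_leg hℓ hι (by lia)⟩
  · rintro ⟨a, ha, hab, hlt⟩
    have first_summand : numLegsGE ℓ (a + 1) ≤ numLegsGE ℓ a :=
      numLegsGE_antitone ℓ (Nat.le_succ a)
    have second_summand : numLegsGE ℓ (∑ i, ℓ i + 1 - (a + 1)) ≤ numLegsGE ℓ b :=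
      numLegsGE_antitone ℓ (by lia)
    rw [pairCount, pairCount] at hlt
    lia

theorem numLegsGE_zero {ℓ : ι → ℕ} (hℓ : ∀ i, 0 < ℓ i) : numLegsGE ℓ 0 = numLegsGE ℓ 1 :=
  congrArg card (filter_congr fun i _ => by simp [Nat.one_le_iff_ne_zero, (hℓ i).ne'])

theorem numLegsGE_eq_of_pairCount_eq {ℓ : ι → ℕ} {m : κ → ℕ} (hℓ : ∀ i, 0 < ℓ i)
    (hm : ∀ k, 0 < m k) (hι : 3 ≤ Fintype.card ι) (hκ : 3 ≤ Fintype.card κ)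
    (hsum : ∑ i, ℓ i = ∑ k, m k)
    (hpair : ∀ a, 1 ≤ a → 2 * a ≤ ∑ i, ℓ i + 1 → pairCount ℓ a = pairCount m a) (b : ℕ) :
    numLegsGE ℓ b = numLegsGE m b := by
  have eq_of_long {b : ℕ} (hb : ∑ i, ℓ i + 1 < 2 * b) : numLegsGE ℓ b = numLegsGE m b := by
    have hpos : 0 < numLegsGE ℓ b ↔ 0 < numLegsGE m b := by
      rw [numLegsGE_pos_iff_exists_pairCount_lt hℓ hι hb,
        numLegsGE_pos_iff_exists_pairCount_lt hm hκ (hsum ▸ hb), ← hsum]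
      refine exists_congr fun a => and_congr_right fun ha => and_congr_right fun hab => ?_
      rw [hpair a ha (by lia), hpair (a + 1) (by lia) (by lia)]
    have hℓ_le := numLegsGE_le_one hℓ hι (b := b) (by lia)
    have hm_le := numLegsGE_le_one hm hκ (b := b) (by lia)
    lia
  have eq_of_pos {b : ℕ} (hb : 1 ≤ b) : numLegsGE ℓ b = numLegsGE m b := by
    obtain hlong | hshort := lt_or_ge (∑ i, ℓ i + 1) (2 * b)
    · exact eq_of_long hlong
    · have hb_pair := hpair b hb hshort
      rw [pairCount, pairCount, ← hsum] at hb_pair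
      obtain hmid | hlt := hshort.eq_or_lt
      · rw [show ∑ i, ℓ i + 1 - b = b by lia] at hb_pair
        lia
      · rw [eq_of_long (b := ∑ i, ℓ i + 1 - b) (by lia)] at hb_pair
        lia
  obtain rfl | hb := Nat.eq_zero_or_pos b
  · rw [numLegsGE_zero hℓ, numLegsGE_zero hm, eq_of_pos le_rfl]
  · exact eq_of_pos hb

theorem card_fiber_add_numLegsGE_succ (ℓ : ι → ℕ) (b : ℕ) :
    Fintype.card {i // ℓ i = b} + numLegsGE ℓ (b + 1) = numLegsGE ℓ b := by
  classical
  rw [Fintype.card_subtype, numLegsGE, numLegsGE, ← card_union_of_disjoint]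
  · congr 1
    ext i
    simp only [mem_union, mem_filter, mem_univ, true_and]
    lia
  · exact disjoint_filter.2 fun i _ => by lia

theorem exists_equiv_of_numLegsGE_eq {ℓ : ι → ℕ} {m : κ → ℕ}
    (h : ∀ b, numLegsGE ℓ b = numLegsGE m b) : ∃ σ : ι ≃ κ, ∀ i, m (σ i) = ℓ i := by
  have hcard (b : ℕ) : Fintype.card {i // ℓ i = b} = Fintype.card {k // m k = b} := by
    have hℓ := card_fiber_add_numLegsGE_succ ℓ b
    rw [h, h, ← card_fiber_add_numLegsGE_succ m b] at hℓ
    exact Nat.add_right_cancel hℓ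
  let fiberEquiv (b : ℕ) : {i // ℓ i = b} ≃ {k // m k = b} := Fintype.equivOfCardEq (hcard b)
  exact ⟨Equiv.ofFiberEquiv fiberEquiv, Equiv.ofFiberEquiv_map fiberEquiv⟩

end Legs

/-! ### The spider with given leg lengths -/

section SpiderGraph

variable {ι κ : Type*}

/-- The parent map of the spider whose leg `i` has `ℓ i` vertices: the centre is `none`, and
`some ⟨i, k⟩` is the vertex of leg `i` at distance `k + 1` from the centre. -/
def spiderParent (ℓ : ι → ℕ) : Option (Σ i, Fin (ℓ i)) → Option (Σ i, Fin (ℓ i))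
  | none => none
  | some ⟨_, 0, _⟩ => none
  | some ⟨i, k + 1, hk⟩ => some ⟨i, k, Nat.lt_of_succ_lt hk⟩

/-- The distance of a vertex of the spider from the centre. -/
def spiderDepth (ℓ : ι → ℕ) : Option (Σ i, Fin (ℓ i)) → ℕ
  | none => 0
  | some x => x.2 + 1

/-- The spider with leg lengths `ℓ`. -/
abbrev spiderGraph (ℓ : ι → ℕ) : SimpleGraph (Option (Σ i, Fin (ℓ i))) :=
  parentGraph (spiderParent ℓ)

theorem isParentMap_spiderParent (ℓ : ι → ℕ) :
    IsParentMap none (spiderParent ℓ) (spiderDepth ℓ) where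
  map_root := rfl
  depth_root := rfl
  depth_eq_succ
    | none, h => absurd rfl h
    | some ⟨_, 0, _⟩, _ => rfl
    | some ⟨_, _ + 1, _⟩, _ => rfl

/-- Spiders with the same leg lengths up to reindexing are isomorphic. -/
def spiderGraphCongr {ℓ : ι → ℕ} {m : κ → ℕ} (σ : ι ≃ κ) (h : ∀ i, m (σ i) = ℓ i) :
    spiderGraph ℓ ≃g spiderGraph m :=
  parentGraphIso (Equiv.optionCongr (Equiv.sigmaCongr σ fun i => finCongr (h i).symm)) <| by
    rintro (_ | ⟨i, _ | k, hk⟩) <;> rfl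

theorem spiderParent_iterate {ℓ : ι → ℕ} {i : ι} (j : Fin (ℓ i)) {k : ℕ} (hk : k ≤ j) :
    (spiderParent ℓ)^[k] (some ⟨i, j⟩) = some ⟨i, j - k, by lia⟩ := by
  induction k with
  | zero => rfl
  | succ k ih =>
    rw [Function.iterate_succ_apply', ih (by lia)]
    obtain ⟨l, hl⟩ : ∃ l, (j : ℕ) - k = l + 1 := ⟨j - k - 1, by lia⟩
    simp only [hl, spiderParent, show (j : ℕ) - (k + 1) = l by lia]

variable [Fintype ι]

theorem card_option_sigma_fin (ℓ : ι → ℕ) :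
    Fintype.card (Option (Σ i, Fin (ℓ i))) = ∑ i, ℓ i + 1 := by
  simp only [Fintype.card_option, Fintype.card_sigma, Fintype.card_fin]

theorem descendants_spiderParent (ℓ : ι → ℕ) (i : ι) (k : Fin (ℓ i)) :
    descendants (spiderParent ℓ) (some ⟨i, k⟩) =
      (Ici k).map ((Function.Embedding.sigmaMk i).trans Function.Embedding.some) := by
  ext w
  simp only [mem_descendants, mem_map, mem_Ici]
  constructor
  · rintro ⟨n, hn⟩
    obtain _ | ⟨j, l⟩ := w
    · rw [Function.iterate_fixed rfl] at hn
      exact absurd hn (by simp)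
    · have hdepth := (isParentMap_spiderParent ℓ).depth_iterate n (some ⟨j, l⟩)
      rw [hn] at hdepth
      have hdepth : (k : ℕ) + 1 = l + 1 - n := hdepth
      rw [spiderParent_iterate l (by lia)] at hn
      obtain ⟨rfl, -⟩ := Sigma.mk.inj_iff.1 (Option.some.inj hn)
      exact ⟨l, Fin.le_def.2 (by lia), rfl⟩
  · rintro ⟨l, hl, rfl⟩
    refine ⟨l - k, ?_⟩
    have := spiderParent_iterate l (Nat.sub_le l k)
    simp [this, Nat.sub_sub_self (Fin.le_def.1 hl)]

theorem card_descendants_spiderParent (ℓ : ι → ℕ) (i : ι) (k : Fin (ℓ i)) :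
    #(descendants (spiderParent ℓ) (some ⟨i, k⟩)) = ℓ i - k := by
  rw [descendants_spiderParent, card_map, Fin.card_Ici]

open Classical in
theorem card_filter_card_descendants_eq (ℓ : ι → ℕ) {b : ℕ} (hb : 0 < b) :
    #{v | v ≠ none ∧ #(descendants (spiderParent ℓ) v) = b} = numLegsGE ℓ b := by
  have hlt {i : ι} (hi : i ∈ ({i | b ≤ ℓ i} : Finset ι)) : ℓ i - b < ℓ i := by
    have := (mem_filter.1 hi).2
    lia
  refine (card_bij (fun i hi => some ⟨i, ℓ i - b, hlt hi⟩) (fun i hi => ?_)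
    (fun i _ j _ hij => congrArg Sigma.fst (Option.some.inj hij)) fun v hv => ?_).symm
  · have hbi := (mem_filter.1 hi).2
    exact mem_filter.2 ⟨mem_univ _, Option.some_ne_none _,
      (card_descendants_spiderParent ℓ i _).trans (Nat.sub_sub_self hbi)⟩
  · obtain ⟨-, hne, hcard⟩ := mem_filter.1 hv
    obtain ⟨⟨i, k⟩, rfl⟩ := Option.ne_none_iff_exists'.1 hne
    rw [card_descendants_spiderParent] at hcard
    refine ⟨i, mem_filter.2 ⟨mem_univ _, by lia⟩, ?_⟩
    congr! 2
    exact Fin.ext (show ℓ i - b = k by lia)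

theorem pairCount_eq_NCoeff_spiderGraph (ℓ : ι → ℕ) {a : ℕ} (ha : 1 ≤ a) (has : a ≤ ∑ i, ℓ i) :
    pairCount ℓ a = (if 2 * a = ∑ i, ℓ i + 1 then 2 else 1) *
      NCoeff (spiderGraph ℓ) {∑ i, ℓ i + 1 - a, a} := by
  classical
  have hN := (isParentMap_spiderParent ℓ).NCoeff_parentGraph (a := a)
    (by rw [card_option_sigma_fin]; lia)
  rw [card_option_sigma_fin] at hN
  rw [hN, pairCount, ← card_filter_card_descendants_eq ℓ ha,
    ← card_filter_card_descendants_eq ℓ (by lia : 0 < ∑ i, ℓ i + 1 - a)]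
  split_ifs with hmid
  · simp only [show ∑ i, ℓ i + 1 - a = a by lia, or_self, two_mul]
  · rw [one_mul, ← card_union_of_disjoint, ← filter_or]
    · simp only [and_or_left]
    · exact disjoint_filter.2 fun v _ => by lia

end SpiderGraph

/-! ### Spiders as legs attached to a centre -/

theorem exists_adj_dist_eq_succ {G : SimpleGraph V} (hG : G.Connected) {c v : V} (hv : v ≠ c) :
    ∃ w, G.Adj v w ∧ G.dist v c = G.dist w c + 1 := by
  obtain ⟨p, hp⟩ := hG.exists_walk_length_eq_dist v c
  cases p with
  | nil => exact absurd rfl hv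
  | @cons _ w _ hvw q =>
    rw [Walk.length_cons] at hp
    have hwc : G.dist w c ≤ q.length := dist_le q
    have hvc : G.dist v c ≤ G.dist v w + G.dist w c := hG.dist_triangle
    rw [dist_eq_one_iff_adj.2 hvw] at hvc
    exact ⟨w, hvw, by lia⟩

theorem exists_isParentMap_of_isTree {T : SimpleGraph V} (hT : T.IsTree) (c : V) :
    ∃ f, IsParentMap c f (T.dist · c) ∧ parentGraph f = T := by
  classical
  have exists_parent (v : V) (hv : v ≠ c) := exists_adj_dist_eq_succ hT.connected hv
  choose! f hadj hdist using exists_parent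
  have hne {v : V} (hv : v ≠ c) : Function.update f c c v = f v := Function.update_of_ne hv _ _
  have hf : IsParentMap c (Function.update f c c) (T.dist · c) :=
    { map_root := Function.update_self ..
      depth_root := dist_self
      depth_eq_succ := fun v hv => by rw [hne hv]; exact hdist v hv }
  have hle : parentGraph (Function.update f c c) ≤ T := by
    rw [← edgeSet_subset_edgeSet]
    intro e he
    obtain ⟨v, hv, rfl⟩ := hf.mem_edgeSet_parentGraph.1 he
    rw [parentEdge, hne hv]
    exact hadj v hv
  exact ⟨_, hf, (isTree_iff_minimal_connected.1 hT).eq_of_le hf.connected hle⟩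

/-- The branches at the root `c` under the parent map `f`, each given by its vertex next to `c`. -/
abbrev Foot (f : V → V) (c : V) : Type _ := {u // u ≠ c ∧ f u = c}

/-- The child of the root above `v`; the root itself is sent to the root. -/
def foot (f : V → V) (d : V → ℕ) (v : V) : V := f^[d v - 1] v

open Classical in
/-- The largest depth in the branch at the child `u` of the root. This is the number of vertices of
the branch when it is a path. -/
noncomputable def legLength [Fintype V] (f : V → V) (d : V → ℕ) (u : V) : ℕ :=
  ({v | foot f d v = u} : Finset V).sup d

theorem depth_le_legLength [Fintype V] (f : V → V) (d : V → ℕ) (v : V) :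
    d v ≤ legLength f d (foot f d v) := by
  classical
  exact le_sup (f := d) (mem_filter.2 ⟨mem_univ v, rfl⟩)

theorem sigma_fin_ext {ι : Type*} {ℓ : ι → ℕ} {x y : Σ i, Fin (ℓ i)} (hfst : x.1 = y.1)
    (hsnd : (x.2 : ℕ) = y.2) : x = y := by
  obtain ⟨i, k⟩ := x
  obtain ⟨j, l⟩ := y
  obtain rfl : i = j := hfst
  exact congrArg _ (Fin.ext hsnd)

theorem spiderParent_of_snd_eq_zero {ι : Type*} {ℓ : ι → ℕ} {x : Σ i, Fin (ℓ i)}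
    (hx : (x.2 : ℕ) = 0) : spiderParent ℓ (some x) = none := by
  obtain ⟨i, _ | k, hk⟩ := x
  exacts [rfl, absurd hx k.succ_ne_zero]

theorem spiderParent_of_snd_eq_succ {ι : Type*} {ℓ : ι → ℕ} {x y : Σ i, Fin (ℓ i)}
    (hfst : x.1 = y.1) (hsnd : (x.2 : ℕ) = y.2 + 1) : spiderParent ℓ (some x) = some y := by
  obtain ⟨i, _ | k, hk⟩ := x
  · exact absurd hsnd.symm (Nat.succ_ne_zero _)
  · exact congrArg some (sigma_fin_ext hfst (Nat.succ_injective hsnd))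

namespace IsParentMap

variable {c : V} {f : V → V} {d : V → ℕ}

theorem foot_map (hf : IsParentMap c f d) {v : V} (hv : f v ≠ c) :
    foot f d (f v) = foot f d v := by
  have := hf.depth_map v
  have := hf.depth_pos hv
  rw [foot, foot, ← Function.iterate_succ_apply, hf.depth_map]
  congr 1
  lia

theorem foot_of_map_eq_root (hf : IsParentMap c f d) {v : V} (hv : f v = c) :
    foot f d v = v := by
  have := hf.depth_map v
  rw [hv, hf.depth_root] at this
  rw [foot, ← this, Function.iterate_zero_apply]

theorem foot_iterate (hf : IsParentMap c f d) {v : V} {k : ℕ} (hk : k < d v) :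
    foot f d (f^[k] v) = foot f d v := by
  rw [foot, foot, hf.depth_iterate, ← Function.iterate_add_apply]
  congr 1
  lia

theorem foot_ne_root_and_map_foot (hf : IsParentMap c f d) {v : V} (hv : v ≠ c) :
    foot f d v ≠ c ∧ f (foot f d v) = c := by
  have hpos := hf.depth_pos hv
  have hdepth : d (foot f d v) = 1 := by
    rw [foot, hf.depth_iterate]
    lia
  rw [ne_eq, ← hf.depth_eq_zero_iff, ← hf.depth_eq_zero_iff, hf.depth_map, hdepth]
  exact ⟨one_ne_zero, rfl⟩

theorem eq_of_foot_eq_of_depth_eq (hf : IsParentMap c f d)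
    (hlegs : ∀ v w, f v = f w → f v ≠ c → v = w) {v w : V} (hfoot : foot f d v = foot f d w)
    (hdepth : d v = d w) : v = w := by
  induction v using hf.induction_on generalizing w with
  | root => exact (hf.depth_eq_zero_iff.1 (hdepth ▸ hf.depth_root)).symm
  | step v _ ih =>
    have hmap_depth : d (f v) = d (f w) := by rw [hf.depth_map, hf.depth_map, hdepth]
    by_cases hfv : f v = c
    · have hfw : f w = c := hf.depth_eq_zero_iff.1 (by rw [← hmap_depth, hfv, hf.depth_root])
      rwa [hf.foot_of_map_eq_root hfv, hf.foot_of_map_eq_root hfw] at hfoot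
    · have hfw : f w ≠ c := fun h =>
        hfv (hf.depth_eq_zero_iff.1 (by rw [hmap_depth, h, hf.depth_root]))
      exact hlegs v w (ih (by rwa [hf.foot_map hfv, hf.foot_map hfw]) hmap_depth) hfv

variable [Fintype V]

theorem legLength_pos (hf : IsParentMap c f d) (u : Foot f c) : 0 < legLength f d u := by
  have h := depth_le_legLength f d u
  rw [hf.foot_of_map_eq_root u.2.2] at h
  exact (hf.depth_pos u.2.1).trans_le h

theorem exists_foot_eq_and_depth_eq (hf : IsParentMap c f d) (u : Foot f c) {k : ℕ} (hk : 0 < k)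
    (hku : k ≤ legLength f d u) : ∃ v, foot f d v = u ∧ d v = k := by
  classical
  obtain ⟨v, hv, hdv⟩ := exists_mem_eq_sup ({v | foot f d v = u} : Finset V)
    ⟨u, mem_filter.2 ⟨mem_univ _, hf.foot_of_map_eq_root u.2.2⟩⟩ d
  have hdv : k ≤ d v := by
    convert hku using 1
    rw [← hdv, legLength]
  refine ⟨f^[d v - k] v, ?_, by rw [hf.depth_iterate]; lia⟩
  rw [hf.foot_iterate (by lia)]
  exact (mem_filter.1 hv).2

open Classical in
/-- The position of a vertex in the spider: the root is the centre, and any other vertex is located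
by its leg and its depth. -/
noncomputable def legCoord (hf : IsParentMap c f d) (v : V) :
    Option (Σ u : Foot f c, Fin (legLength f d u)) :=
  if hv : v = c then none
  else some ⟨⟨foot f d v, hf.foot_ne_root_and_map_foot hv⟩, d v - 1, by
    have := depth_le_legLength f d v
    have := hf.depth_pos hv
    dsimp only
    lia⟩

theorem legCoord_eq_none_iff (hf : IsParentMap c f d) {v : V} :
    hf.legCoord v = none ↔ v = c := by
  simp [legCoord]

theorem legCoord_eq_some_iff (hf : IsParentMap c f d) {v : V}
    {x : Σ u : Foot f c, Fin (legLength f d u)} :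
    hf.legCoord v = some x ↔ foot f d v = x.1 ∧ d v = x.2 + 1 := by
  obtain rfl | hv := eq_or_ne v c
  · simp [hf.legCoord_eq_none_iff.2 rfl, hf.depth_root]
  · have := hf.depth_pos hv
    rw [legCoord, dif_neg hv, Option.some_inj]
    constructor
    · rintro rfl
      exact ⟨rfl, by dsimp only; lia⟩
    · rintro ⟨hfoot, hdepth⟩
      exact sigma_fin_ext (Subtype.ext hfoot) (by dsimp only; lia)

theorem legCoord_injective (hf : IsParentMap c f d)
    (hlegs : ∀ v w, f v = f w → f v ≠ c → v = w) : Function.Injective hf.legCoord := by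
  intro v w h
  cases hw : hf.legCoord w with
  | none => rw [hf.legCoord_eq_none_iff.1 (h.trans hw), hf.legCoord_eq_none_iff.1 hw]
  | some x =>
    obtain ⟨hv_foot, hv_depth⟩ := hf.legCoord_eq_some_iff.1 (h.trans hw)
    obtain ⟨hw_foot, hw_depth⟩ := hf.legCoord_eq_some_iff.1 hw
    exact hf.eq_of_foot_eq_of_depth_eq hlegs (hv_foot.trans hw_foot.symm)
      (hv_depth.trans hw_depth.symm)

theorem legCoord_surjective (hf : IsParentMap c f d) : Function.Surjective hf.legCoord
  | none => ⟨c, hf.legCoord_eq_none_iff.2 rfl⟩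
  | some ⟨u, k⟩ =>
    let ⟨v, hv⟩ := hf.exists_foot_eq_and_depth_eq u k.1.succ_pos k.2
    ⟨v, hf.legCoord_eq_some_iff.2 hv⟩

theorem legCoord_semiconj (hf : IsParentMap c f d) :
    Function.Semiconj hf.legCoord f (spiderParent fun u : Foot f c => legLength f d u) := by
  intro v
  cases hv : hf.legCoord v with
  | none => rw [hf.legCoord_eq_none_iff.1 hv, hf.map_root, hf.legCoord_eq_none_iff.2 rfl]; rfl
  | some x =>
    obtain ⟨hx_foot, hx_depth⟩ := hf.legCoord_eq_some_iff.1 hv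
    have hmap_depth := hf.depth_map v
    cases hfv : hf.legCoord (f v) with
    | none =>
      rw [hf.legCoord_eq_none_iff.1 hfv, hf.depth_root] at hmap_depth
      exact (spiderParent_of_snd_eq_zero (by lia)).symm
    | some y =>
      obtain ⟨hy_foot, hy_depth⟩ := hf.legCoord_eq_some_iff.1 hfv
      have hfv_ne : f v ≠ c := fun h => by simp [hf.legCoord_eq_none_iff.2 h] at hfv
      rw [hf.foot_map hfv_ne] at hy_foot
      exact (spiderParent_of_snd_eq_succ (Subtype.ext (hx_foot.symm.trans hy_foot))
        (by lia)).symm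

/-- A tree that branches only at its root is a spider, with one leg for each child of the root. -/
noncomputable def isoSpiderGraph (hf : IsParentMap c f d)
    (hlegs : ∀ v w, f v = f w → f v ≠ c → v = w) :
    parentGraph f ≃g spiderGraph fun u : Foot f c => legLength f d u :=
  parentGraphIso (Equiv.ofBijective _ ⟨hf.legCoord_injective hlegs, hf.legCoord_surjective⟩)
    hf.legCoord_semiconj

theorem three_le_degree_of_map_eq [DecidableRel (parentGraph f).Adj] (hf : IsParentMap c f d)
    {v w : V} (hvw : v ≠ w) (hmap : f v = f w) (hne : f v ≠ c) :
    3 ≤ (parentGraph f).degree (f v) := by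
  have hw_depth : d (f v) = d w - 1 := hmap ▸ hf.depth_map w
  have hv_depth := hf.depth_map v
  have hfv_depth := hf.depth_map (f v)
  have hpos := hf.depth_pos hne
  rw [← card_neighborFinset_eq_degree, Nat.succ_le_iff, two_lt_card_iff]
  simp only [mem_neighborFinset, parentGraph_adj]
  refine ⟨v, w, f (f v), ⟨?_, Or.inr rfl⟩, ⟨?_, Or.inr hmap.symm⟩, ⟨?_, Or.inl rfl⟩, hvw, ?_, ?_⟩
  all_goals exact fun h => by have := congrArg d h; lia

theorem card_foot [DecidableRel (parentGraph f).Adj] [Fintype (Foot f c)]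
    (hf : IsParentMap c f d) : Fintype.card (Foot f c) = (parentGraph f).degree c := by
  classical
  rw [← card_neighborFinset_eq_degree, Fintype.card_subtype]
  congr 1
  ext u
  rw [mem_filter, mem_neighborFinset, parentGraph_adj, hf.map_root]
  simp only [mem_univ, true_and]
  tauto

end IsParentMap

universe u

theorem IsSpider.exists_iso_spiderGraph {V : Type u} [Fintype V] {T : SimpleGraph V}
    [DecidableRel T.Adj] (hT : IsSpider T) :
    ∃ (ι : Type u) (_ : Fintype ι) (ℓ : ι → ℕ), 3 ≤ Fintype.card ι ∧ (∀ i, 0 < ℓ i) ∧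
      Nonempty (T ≃g spiderGraph ℓ) := by
  classical
  obtain ⟨htree, c, hc, hunique⟩ := hT
  obtain ⟨f, hf, rfl⟩ := exists_isParentMap_of_isTree htree c
  have hlegs (v w : V) (hmap : f v = f w) (hne : f v ≠ c) : v = w := by
    by_contra hvw
    exact hne (hunique (f v) (hf.three_le_degree_of_map_eq hvw hmap hne))
  exact ⟨Foot f c, inferInstance, fun u => legLength f _ u, hc.trans_eq hf.card_foot.symm,
    hf.legLength_pos, ⟨hf.isoSpiderGraph hlegs⟩⟩

/-- Let `T` and `U` be spiders, each with `n` vertices, such that for every partition of `n`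
into exactly two parts `(n−a, a)` we have `N_{(n−a,a)}(T) = N_{(n−a,a)}(U)`.  Then `T` and `U`
are isomorphic: the two-part portion of the chromatic symmetric function determines a spider
up to isomorphism. -/
theorem stmt_14 [Fintype V] [Fintype W] (T : SimpleGraph V) (U : SimpleGraph W)
    [DecidableRel T.Adj] [DecidableRel U.Adj]
    (hT : IsSpider T) (hU : IsSpider U) (n : ℕ)
    (hVn : Fintype.card V = n) (hWn : Fintype.card W = n)
    (hN : ∀ a : ℕ, 1 ≤ a → 2 * a ≤ n →
      NCoeff T {n - a, a} = NCoeff U {n - a, a}) :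
    Nonempty (T ≃g U) := by
  obtain ⟨ι, _, ℓ, hι, hℓ, ⟨eT⟩⟩ := hT.exists_iso_spiderGraph
  obtain ⟨κ, _, m, hκ, hm, ⟨eU⟩⟩ := hU.exists_iso_spiderGraph
  have hℓn : ∑ i, ℓ i + 1 = n := by
    rw [← card_option_sigma_fin, ← Fintype.card_congr eT.toEquiv, hVn]
  have hmn : ∑ k, m k + 1 = n := by
    rw [← card_option_sigma_fin, ← Fintype.card_congr eU.toEquiv, hWn]
  have hpair (a : ℕ) (ha : 1 ≤ a) (han : 2 * a ≤ ∑ i, ℓ i + 1) :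
      pairCount ℓ a = pairCount m a := by
    rw [pairCount_eq_NCoeff_spiderGraph ℓ ha (by lia),
      pairCount_eq_NCoeff_spiderGraph m ha (by lia), ← NCoeff_eq_of_iso eT,
      ← NCoeff_eq_of_iso eU, hℓn, hmn, hN a ha (by lia)]
  have hlegs := numLegsGE_eq_of_pairCount_eq hℓ hm hι hκ (by lia) hpair
  obtain ⟨σ, hσ⟩ := exists_equiv_of_numLegsGE_eq hlegs
  exact ⟨eT.trans ((spiderGraphCongr σ hσ).trans eU.symm)⟩
end
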